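/- arXiv:math/9912249 — 7 statements merged into one kernel-verified Lean document; each statement's English description precedes it below -/
import Mathlib

section
/- If k > 1/2, j ≥ 0, and X ⊆ ℝ, then, as sums with values in [0,∞], S_E(j,k,X) ≤ R_E(j,k,X) ≤ ζ(2k)·S_E(j,k,X), where ζ is the Riemann zeta function. -/
noncomputable section

/-- `F(u,v) = v·(u³ + au²v + buv² + cv³) = v⁴ f(u/v)`. -/
def Fbin (a b c u v : ℤ) : ℤ := v * (u^3 + a*u^2*v + b*u*v^2 + c*v^3)

/-- `Ψ = {(u,v) ∈ ℤ² : gcd(u,v) = 1 and F(u,v) ≠ 0}`. -/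
def Psi (a b c : ℤ) : Set (ℤ × ℤ) := {p | Int.gcd p.1 p.2 = 1 ∧ Fbin a b c p.1 p.2 ≠ 0}

/-- `h(u/v) = max(1, log|u|, log|v|)` for coprime `u, v`. -/
def ht (u v : ℤ) : ℝ := max 1 (max (Real.log |(u : ℝ)|) (Real.log |(v : ℝ)|))

/-- the polynomial `f(x) = x³ + ax² + bx + c` has three distinct complex roots. -/
def DistinctRoots (a b c : ℤ) : Prop :=
  ∃ r₁ r₂ r₃ : ℂ, r₁ ≠ r₂ ∧ r₁ ≠ r₃ ∧ r₂ ≠ r₃ ∧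
    ∀ z : ℂ, z^3 + a*z^2 + b*z + c = (z - r₁) * (z - r₂) * (z - r₃)

/-- `sq` is a squarefree-part function: for nonzero `n`, `sq n` is squarefree and
`n = sq n · m²` for some rational `m`. -/
def IsSqfreePart (sq : ℤ → ℤ) : Prop :=
  ∀ n : ℤ, n ≠ 0 → Squarefree (sq n) ∧ ∃ m : ℚ, (n : ℚ) = sq n * m^2

/-- the general term `|s(F(u,v))|^{-k} · h(u/v)^{-j}` of `S_E(j,k)`. -/
def STerm (a b c : ℤ) (sq : ℤ → ℤ) (j k : ℝ) (p : ℤ × ℤ) : ℝ :=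
  |(sq (Fbin a b c p.1 p.2) : ℝ)| ^ (-k) * ht p.1 p.2 ^ (-j)

/-- index set of `S_E(j,k,X)`: `(u,v) ∈ Ψ` with `u/v ∈ X`. -/
def SIdx (a b c : ℤ) (X : Set ℝ) : Set (ℤ × ℤ) :=
  {p | p ∈ Psi a b c ∧ ((p.1 : ℝ) / (p.2 : ℝ)) ∈ X}

/-- `S_E(j,k,X)` converges. -/
def SConv (a b c : ℤ) (sq : ℤ → ℤ) (j k : ℝ) (X : Set ℝ) : Prop :=
  Summable fun p : SIdx a b c X => STerm a b c sq j k p.1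

/-- index set of `R_E(j,k,X)`: `t ≥ 1`, `(u,v) ∈ Ψ`, `u/v ∈ X`, `t² ∣ F(u,v)`. -/
def RIdx (a b c : ℤ) (X : Set ℝ) : Set (ℕ × ℤ × ℤ) :=
  {q | 1 ≤ q.1 ∧ q.2 ∈ Psi a b c ∧ ((q.2.1 : ℝ) / (q.2.2 : ℝ)) ∈ X ∧
    (q.1 : ℤ)^2 ∣ Fbin a b c q.2.1 q.2.2}

/-- the general term `t^{2k} · |F(u,v)|^{-k} · h(u/v)^{-j}` of `R_E(j,k)`. -/
def RTerm (a b c : ℤ) (j k : ℝ) (q : ℕ × ℤ × ℤ) : ℝ :=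
  (q.1 : ℝ) ^ (2*k) * |(Fbin a b c q.2.1 q.2.2 : ℝ)| ^ (-k) * ht q.2.1 q.2.2 ^ (-j)

/-- `R_E(j,k,X)` converges. -/
def RConv (a b c : ℤ) (j k : ℝ) (X : Set ℝ) : Prop :=
  Summable fun q : RIdx a b c X => RTerm a b c j k q.1

/-- `Ω_d = {α ∈ ℤ/d²ℤ : f(α) ≡ 0 (mod d²)}`. -/
def OmegaSet (a b c : ℤ) (d : ℕ) : Set (ZMod (d^2)) :=
  {α | α^3 + (a : ZMod (d^2))*α^2 + (b : ZMod (d^2))*α + (c : ZMod (d^2)) = 0}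

/-- the lattice `L_{α,d,d'} = {(u,v) : u ≡ αv (mod d²), v ≡ 0 (mod d'²)}`. -/
def latL (d d' : ℕ) (α : ZMod (d^2)) : Set (ℤ × ℤ) :=
  {p | ((p.1 : ZMod (d^2)) = α * (p.2 : ZMod (d^2))) ∧ ((d' : ℤ))^2 ∣ p.2}

/-- `ω` is a choice, for coprime `d, d' ≥ 1` and `α ∈ Ω_d`, of a shortest nonzero
vector `ω_{α,d,d'}` of the lattice `L_{α,d,d'}` for the Euclidean norm. -/
def IsShortestChoice (a b c : ℤ) (ω : (d d' : ℕ) → ZMod (d^2) → ℤ × ℤ) : Prop :=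
  ∀ d d' : ℕ, 0 < d → 0 < d' → Nat.Coprime d d' → ∀ α ∈ OmegaSet a b c d,
    ω d d' α ∈ latL d d' α ∧ ω d d' α ≠ 0 ∧
    ∀ p ∈ latL d d' α, p ≠ 0 →
      (ω d d' α).1^2 + (ω d d' α).2^2 ≤ p.1^2 + p.2^2

/-- index set of `Q_E(j,k)`: coprime `d, d' ≥ 1`, `α ∈ Ω_d`, `ω_{α,d,d'} ∈ Ψ`. -/
def QIdx (a b c : ℤ) (ω : (d d' : ℕ) → ZMod (d^2) → ℤ × ℤ) :
    Set (Σ d : ℕ, ℕ × ZMod (d^2)) :=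
  {x | 0 < x.1 ∧ 0 < x.2.1 ∧ Nat.Coprime x.1 x.2.1 ∧ x.2.2 ∈ OmegaSet a b c x.1 ∧
    ω x.1 x.2.1 x.2.2 ∈ Psi a b c}

/-- the general term `(dd')^{2k} · max(1, log(dd'))^{-j} · ‖ω_{α,d,d'}‖^{-4k}` of `Q_E(j,k)`. -/
def QTerm (j k : ℝ) (ω : (d d' : ℕ) → ZMod (d^2) → ℤ × ℤ)
    (x : Σ d : ℕ, ℕ × ZMod (d^2)) : ℝ :=
  ((x.1 : ℝ) * (x.2.1 : ℝ)) ^ (2*k) * max 1 (Real.log ((x.1 : ℝ) * (x.2.1 : ℝ))) ^ (-j) *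
    Real.sqrt (((ω x.1 x.2.1 x.2.2).1 : ℝ)^2 + ((ω x.1 x.2.1 x.2.2).2 : ℝ)^2) ^ (-(4*k))

/-- `Q_E(j,k)` converges. -/
def QConv (a b c : ℤ) (j k : ℝ) (ω : (d d' : ℕ) → ZMod (d^2) → ℤ × ℤ) : Prop :=
  Summable fun x : QIdx a b c ω => QTerm j k ω x.1

/-- the quadratic twist `E^{(D)} : Dy² = f(x)`, in Weierstrass form
`y² = x³ + aDx² + bD²x + cD³` (isomorphic via `(x,y) ↦ (Dx, D²y)`). -/
def twist (a b c D : ℤ) : WeierstrassCurve.Affine ℚ :=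
  { a₁ := 0, a₂ := a*D, a₃ := 0, a₄ := b*D^2, a₆ := c*D^3 }

/-- `rank_ℤ E^{(D)}(ℚ) < 2j` for every nonzero integer `D`: there is no
ℤ-linearly independent family of `⌈2j⌉` rational points on `E^{(D)}`. -/
def RankBound (a b c : ℤ) (j : ℝ) : Prop :=
  ∀ D : ℤ, D ≠ 0 →
    ¬ ∃ P : Fin ⌈2*j⌉₊ → (twist a b c D).Point, LinearIndependent ℤ P

/-- `X ⊆ ℝ` is broad: open, and meets both `(e_max, ∞)` and `(-∞, e_min)`. -/
def Broad (a b c : ℤ) (X : Set ℝ) : Prop :=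
  IsOpen X ∧ (∃ x ∈ X, ∀ r : ℝ, r^3 + a*r^2 + b*r + c = 0 → r < x) ∧
    (∃ x ∈ X, ∀ r : ℝ, r^3 + a*r^2 + b*r + c = 0 → x < r)

/-- the set of triples `(α, d, d')` with `d, d'` coprime positive integers,
`dd' = t`, and `α ∈ Ω_d`. -/
def TripSet (a b c : ℤ) (t : ℕ) : Set (Σ d : ℕ, ℕ × ZMod (d^2)) :=
  {x | 0 < x.1 ∧ 0 < x.2.1 ∧ Nat.Coprime x.1 x.2.1 ∧ x.1 * x.2.1 = t ∧
    x.2.2 ∈ OmegaSet a b c x.1}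

end

/-!
Write a nonzero integer as `n = s * m ^ 2` with `s` squarefree. Then `t ^ 2 ∣ n` exactly when
`t ∣ m`, and replacing `t` by the complementary divisor `d = m / t` gives
`∑ t ^ (2k) * |n| ^ (-k) = |s| ^ (-k) * ∑ d ^ (-2k)`, both sums over the divisors of `m`.
The last sum contains the term `d = 1` and is a partial sum of `ζ(2k)`. Applying this to
`n = F(u, v)` and summing over `(u, v)` with the weights `h(u/v) ^ (-j)` yields both bounds.
-/

open scoped ENNReal

theorem dvd_of_sq_dvd_squarefree_mul_sq {R : Type*} [CommMonoidWithZero R] [GCDMonoid R]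
    {s t m : R} (hs : Squarefree s) (h : t ^ 2 ∣ s * m ^ 2) : t ∣ m := by
  obtain rfl | hm := eq_or_ne m 0
  · exact dvd_zero t
  obtain ⟨t', m', htg, hmg, hunit⟩ := extract_gcd t m
  have hg : gcd t m ≠ 0 := fun hg ↦ hm (by rw [hmg, hg, zero_mul])
  have hcoprime : IsRelPrime (t' ^ 2) (m' ^ 2) := (gcd_isUnit_iff_isRelPrime.mp hunit).pow
  have hdvd : t' ^ 2 ∣ s * m' ^ 2 := by
    rw [← mul_dvd_mul_iff_left (pow_ne_zero 2 hg), mul_left_comm, ← mul_pow, ← mul_pow]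
    rwa [← htg, ← hmg]
  have ht' : IsUnit t' := hs t' (sq t' ▸ hcoprime.dvd_of_dvd_mul_right hdvd)
  rw [htg, ht'.mul_right_dvd]
  exact gcd_dvd_right t m

theorem exists_eq_mul_natCast_sq_of_squarefree {n s : ℤ} (hs : Squarefree s) {q : ℚ}
    (h : (n : ℚ) = s * q ^ 2) : ∃ m : ℕ, n = s * (m : ℤ) ^ 2 := by
  have hclear : n * (q.den : ℤ) ^ 2 = s * q.num ^ 2 := by
    have : (n : ℚ) * q.den ^ 2 = s * q.num ^ 2 := by
      rw [h, ← Rat.mul_den_eq_num q]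
      ring
    exact_mod_cast this
  have hdvd : (q.den : ℤ) ∣ q.num :=
    dvd_of_sq_dvd_squarefree_mul_sq hs ⟨n, by rw [← hclear, mul_comm]⟩
  have hden : q.den = 1 := Nat.eq_one_of_dvd_coprimes q.reduced (Int.natCast_dvd.mp hdvd) dvd_rfl
  exact ⟨q.num.natAbs, by simpa [hden] using hclear⟩

/-- The `t ≥ 1` whose square divides `n`: the range of the inner sum in `R_E(j,k,X)`
for `n = F(u,v)`. -/
def squareDivisors (n : ℤ) : Set ℕ := {t | 1 ≤ t ∧ (t : ℤ) ^ 2 ∣ n}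

theorem squareDivisors_squarefree_mul_sq {s : ℤ} (hs : Squarefree s) {m : ℕ} (hm : m ≠ 0) :
    squareDivisors (s * (m : ℤ) ^ 2) = m.divisors := by
  ext t
  simp only [squareDivisors, Set.mem_ofPred_eq, Finset.mem_coe, Nat.mem_divisors]
  constructor
  · rintro ⟨-, hdvd⟩
    exact ⟨Int.natCast_dvd_natCast.mp (dvd_of_sq_dvd_squarefree_mul_sq hs hdvd), hm⟩
  · rintro ⟨hdvd, -⟩
    exact ⟨Nat.pos_of_dvd_of_pos hdvd hm.bot_lt,
      (pow_dvd_pow_of_dvd (Int.natCast_dvd_natCast.mpr hdvd) 2).mul_left s⟩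

theorem rpow_two_mul_mul_abs_mul_sq_rpow_neg (s k : ℝ) {t d : ℝ} (ht : 0 < t) (hd : 0 ≤ d) :
    t ^ (2 * k) * |s * (t * d) ^ 2| ^ (-k) = |s| ^ (-k) * d ^ (-(2 * k)) := by
  have hsq : ((t * d) ^ 2) ^ (-k) = t ^ (-(2 * k)) * d ^ (-(2 * k)) := by
    rw [← Real.rpow_natCast_mul (by positivity), Real.mul_rpow ht.le hd]
    norm_num
  have hcancel : t ^ (2 * k) * t ^ (-(2 * k)) = 1 := by
    rw [← Real.rpow_add ht, add_neg_cancel, Real.rpow_zero]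
  rw [abs_mul, abs_sq, Real.mul_rpow (abs_nonneg s) (sq_nonneg _), hsq]
  linear_combination |s| ^ (-k) * d ^ (-(2 * k)) * hcancel

theorem sum_divisors_rpow_mul_abs_mul_sq_rpow_neg (s k : ℝ) (m : ℕ) :
    ∑ t ∈ m.divisors, (t : ℝ) ^ (2 * k) * |s * (m : ℝ) ^ 2| ^ (-k) =
      |s| ^ (-k) * ∑ d ∈ m.divisors, (d : ℝ) ^ (-(2 * k)) := by
  rw [Finset.mul_sum, ← Nat.sum_div_divisors m fun d ↦ |s| ^ (-k) * (d : ℝ) ^ (-(2 * k))]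
  refine Finset.sum_congr rfl fun t ht ↦ ?_
  have htm : (m : ℝ) = t * (m / t : ℕ) :=
    mod_cast (Nat.mul_div_cancel' (Nat.dvd_of_mem_divisors ht)).symm
  rw [htm]
  exact rpow_two_mul_mul_abs_mul_sq_rpow_neg s k (mod_cast Nat.pos_of_mem_divisors ht)
    (Nat.cast_nonneg _)

theorem hasSum_nat_rpow_neg_riemannZeta_re {x : ℝ} (hx : 1 < x) :
    HasSum (fun n : ℕ ↦ (n : ℝ) ^ (-x)) (riemannZeta x).re := by
  have hterm (n : ℕ) : 1 / (n : ℂ) ^ (x : ℂ) = ((n : ℝ) ^ (-x) : ℝ) := by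
    rw [Real.rpow_neg n.cast_nonneg, Complex.ofReal_inv, Complex.ofReal_cpow n.cast_nonneg,
      one_div, Complex.ofReal_natCast]
  have hsummable : Summable fun n : ℕ ↦ (n : ℝ) ^ (-x) := Real.summable_nat_rpow.mpr (by linarith)
  rw [zeta_eq_tsum_one_div_nat_cpow (by simpa using hx), tsum_congr hterm,
    ← Complex.ofReal_tsum, Complex.ofReal_re]
  exact hsummable.hasSum

theorem one_le_sum_divisors_rpow {m : ℕ} (hm : m ≠ 0) (x : ℝ) :
    1 ≤ ∑ d ∈ m.divisors, (d : ℝ) ^ x := by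
  simpa using Finset.single_le_sum (f := fun d : ℕ ↦ (d : ℝ) ^ x) (fun d _ ↦ by positivity)
    (Nat.one_mem_divisors.mpr hm)

theorem sum_rpow_neg_le_riemannZeta_re {x : ℝ} (hx : 1 < x) (A : Finset ℕ) :
    ∑ d ∈ A, (d : ℝ) ^ (-x) ≤ (riemannZeta x).re :=
  sum_le_hasSum A (fun d _ ↦ by positivity) (hasSum_nat_rpow_neg_riemannZeta_re hx)

/-- The inner sum `∑ t ^ (2k) * |n| ^ (-k)` of `R_E(j,k,X)` at `n = F(u,v)`, taken over the
`t ≥ 1` with `t ^ 2 ∣ n`. -/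
noncomputable def squareDivisorSum (k : ℝ) (n : ℤ) : ℝ≥0∞ :=
  ∑' t : squareDivisors n, ENNReal.ofReal ((t : ℝ) ^ (2 * k) * |(n : ℝ)| ^ (-k))

theorem squareDivisorSum_squarefree_mul_sq (k : ℝ) {s : ℤ} (hs : Squarefree s) {m : ℕ}
    (hm : m ≠ 0) :
    squareDivisorSum k (s * (m : ℤ) ^ 2) =
      ENNReal.ofReal (|(s : ℝ)| ^ (-k) * ∑ d ∈ m.divisors, (d : ℝ) ^ (-(2 * k))) := by
  rw [squareDivisorSum, squareDivisors_squarefree_mul_sq hs hm,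
    ← sum_divisors_rpow_mul_abs_mul_sq_rpow_neg, ENNReal.ofReal_sum_of_nonneg]
  · push_cast
    exact m.divisors.tsum_subtype'
      fun t : ℕ ↦ ENNReal.ofReal ((t : ℝ) ^ (2 * k) * |(s : ℝ) * (m : ℝ) ^ 2| ^ (-k))
  · intro t _
    positivity

namespace IsSqfreePart

variable {sq : ℤ → ℤ} {n : ℤ}

theorem exists_squareDivisorSum_eq (hsq : IsSqfreePart sq) (hn : n ≠ 0) (k : ℝ) :
    ∃ m : ℕ, m ≠ 0 ∧ squareDivisorSum k n =
      ENNReal.ofReal (|(sq n : ℝ)| ^ (-k) * ∑ d ∈ m.divisors, (d : ℝ) ^ (-(2 * k))) := by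
  obtain ⟨hs, q, hq⟩ := hsq n hn
  obtain ⟨m, hnm⟩ := exists_eq_mul_natCast_sq_of_squarefree hs hq
  have hm : m ≠ 0 := by
    rintro rfl
    exact hn (by simpa using hnm)
  exact ⟨m, hm, by rw [← squareDivisorSum_squarefree_mul_sq k hs hm, ← hnm]⟩

theorem ofReal_abs_rpow_neg_le_squareDivisorSum (hsq : IsSqfreePart sq) (hn : n ≠ 0)
    (k : ℝ) :
    ENNReal.ofReal (|(sq n : ℝ)| ^ (-k)) ≤ squareDivisorSum k n := by
  obtain ⟨m, hm, hsum⟩ := hsq.exists_squareDivisorSum_eq hn k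
  rw [hsum]
  exact ENNReal.ofReal_le_ofReal
    (le_mul_of_one_le_right (by positivity) (one_le_sum_divisors_rpow hm _))

theorem squareDivisorSum_le_riemannZeta_mul (hsq : IsSqfreePart sq) (hn : n ≠ 0) {k : ℝ}
    (hk : 1 / 2 < k) :
    squareDivisorSum k n ≤
      ENNReal.ofReal (riemannZeta (2 * k : ℝ)).re * ENNReal.ofReal (|(sq n : ℝ)| ^ (-k)) := by
  obtain ⟨m, -, hsum⟩ := hsq.exists_squareDivisorSum_eq hn k
  rw [hsum, ENNReal.ofReal_mul (by positivity), mul_comm]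
  gcongr
  exact sum_rpow_neg_le_riemannZeta_re (by linarith) _

end IsSqfreePart

/-- Reindexes `R_E(j,k,X)` as a sum over `(u,v)`, followed by a sum over `t`. -/
def rIdxEquivSigma (a b c : ℤ) (X : Set ℝ) :
    RIdx a b c X ≃ Σ p : SIdx a b c X, squareDivisors (Fbin a b c p.1.1 p.1.2) where
  toFun q := ⟨⟨q.1.2, q.2.2.1, q.2.2.2.1⟩, ⟨q.1.1, q.2.1, q.2.2.2.2⟩⟩
  invFun x := ⟨(x.2.1, x.1.1), x.2.2.1, x.1.2.1, x.1.2.2, x.2.2.2⟩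

theorem ofReal_STerm (a b c : ℤ) (sq : ℤ → ℤ) (j k : ℝ) (p : ℤ × ℤ) :
    ENNReal.ofReal (STerm a b c sq j k p) =
      ENNReal.ofReal (|(sq (Fbin a b c p.1 p.2) : ℝ)| ^ (-k)) *
        ENNReal.ofReal (ht p.1 p.2 ^ (-j)) :=
  ENNReal.ofReal_mul (by positivity)

theorem tsum_ofReal_RTerm (a b c : ℤ) (j k : ℝ) (X : Set ℝ) :
    ∑' q : RIdx a b c X, ENNReal.ofReal (RTerm a b c j k q.1) =
      ∑' p : SIdx a b c X, squareDivisorSum k (Fbin a b c p.1.1 p.1.2) *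
        ENNReal.ofReal (ht p.1.1 p.1.2 ^ (-j)) := by
  rw [← (rIdxEquivSigma a b c X).symm.tsum_eq, ENNReal.tsum_sigma']
  refine tsum_congr fun p ↦ ?_
  rw [squareDivisorSum, ← ENNReal.tsum_mul_right]
  exact tsum_congr fun t ↦ ENNReal.ofReal_mul (by positivity)

theorem S_le_R_le_zeta_mul_S_general {ι : Type*} {F : ι → ℤ} (hF : ∀ i, F i ≠ 0) (w : ι → ℝ≥0∞)
    {sq : ℤ → ℤ} (hsq : IsSqfreePart sq) {k : ℝ} (hk : 1 / 2 < k) :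
    ∑' i, ENNReal.ofReal (|(sq (F i) : ℝ)| ^ (-k)) * w i ≤ ∑' i, squareDivisorSum k (F i) * w i ∧
      ∑' i, squareDivisorSum k (F i) * w i ≤
        ENNReal.ofReal (riemannZeta (2 * k : ℝ)).re *
          ∑' i, ENNReal.ofReal (|(sq (F i) : ℝ)| ^ (-k)) * w i := by
  simp only [← ENNReal.tsum_mul_left, ← mul_assoc]
  constructor
  · gcongr with i
    exact hsq.ofReal_abs_rpow_neg_le_squareDivisorSum (hF i) k
  · gcongr with i
    exact hsq.squareDivisorSum_le_riemannZeta_mul (hF i) hk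

/-- **Proposition 10(i).** If `k > 1/2`, `j ≥ 0`, and `X ⊆ ℝ`, then, as sums in `[0,∞]`,
`S_E(j,k,X) ≤ R_E(j,k,X) ≤ ζ(2k)·S_E(j,k,X)`. -/
theorem S_le_R_le_zeta_mul_S (a b c : ℤ) (hf : DistinctRoots a b c)
    (sq : ℤ → ℤ) (hsq : IsSqfreePart sq) (j k : ℝ) (hk : 1/2 < k) (hj : 0 ≤ j)
    (X : Set ℝ) :
    (∑' p : SIdx a b c X, ENNReal.ofReal (STerm a b c sq j k p.1)) ≤
        (∑' q : RIdx a b c X, ENNReal.ofReal (RTerm a b c j k q.1)) ∧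
      (∑' q : RIdx a b c X, ENNReal.ofReal (RTerm a b c j k q.1)) ≤
        ENNReal.ofReal ((riemannZeta ((2*k : ℝ) : ℂ)).re) *
          ∑' p : SIdx a b c X, ENNReal.ofReal (STerm a b c sq j k p.1) := by
  simp only [ofReal_STerm, tsum_ofReal_RTerm]
  exact S_le_R_le_zeta_mul_S_general (fun p : SIdx a b c X ↦ p.2.1.2) _ hsq hk
end

section
/- If k > 1/2, j ≥ 0, and X ⊆ ℝ, then the family defining R_E(j,k,X) is summable if and only if the family defining S_E(j,k,X) is summable. -/
/-!
Write `F(u,v) = s m²` with `s` squarefree. Then `t² ∣ F(u,v)` exactly when `t ∣ m`, and for the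
complementary divisor `d = m / t` the general term of `R_E` is `d ^ (-2k)` times the general term
of `S_E`. Hence `R_E` is dominated by the product of `S_E` with `∑ d ^ (-2k)`, which converges
because `2k > 1`, while the terms with `d = 1` form `S_E` itself.
-/

section Squarefree

theorem sq_dvd_squarefree_mul_sq_iff {M : Type*} [CommMonoidWithZero M] [GCDMonoid M]
    {s t m : M} (hs : Squarefree s) : t ^ 2 ∣ s * m ^ 2 ↔ t ∣ m := by
  refine ⟨fun h ↦ ?_, fun h ↦ (pow_dvd_pow_of_dvd h 2).mul_left s⟩
  obtain ⟨t', m', ht, hm, hunit⟩ := extract_gcd t m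
  generalize gcd t m = g at ht hm
  subst ht hm
  rcases eq_or_ne g 0 with rfl | hg
  · simp only [zero_mul, dvd_refl]
  have hdvd : t' ^ 2 ∣ s * m' ^ 2 := by
    rw [mul_pow, mul_pow, mul_left_comm] at h
    exact (mul_dvd_mul_iff_left (pow_ne_zero 2 hg)).mp h
  have hcop : IsRelPrime (t' ^ 2) (m' ^ 2) := (gcd_isUnit_iff_isRelPrime.mp hunit).pow
  have ht' : IsUnit t' := hs t' (sq t' ▸ hcop.dvd_of_dvd_mul_right hdvd)
  exact mul_dvd_mul_left g ht'.dvd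

theorem exists_nat_eq_squarefree_mul_sq {n s : ℤ} {r : ℚ} (hs : Squarefree s)
    (h : (n : ℚ) = s * r ^ 2) : ∃ m : ℕ, n = s * (m : ℤ) ^ 2 := by
  have hsq : IsSquare (s * n) := by
    rw [← Rat.isSquare_intCast_iff]
    exact ⟨s * r, by push_cast; rw [h]; ring⟩
  obtain ⟨e, he⟩ := hsq
  obtain ⟨m, rfl⟩ : s ∣ e :=
    (hs.dvd_pow_iff_dvd two_ne_zero).mp ⟨n, by rw [he, sq]⟩
  refine ⟨m.natAbs, mul_left_cancel₀ hs.ne_zero ?_⟩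
  rw [he, Int.natAbs_sq]
  ring

theorem one_le_of_sq_dvd {t : ℕ} {n : ℤ} (hn : n ≠ 0) (h : (t : ℤ) ^ 2 ∣ n) : 1 ≤ t := by
  rw [Nat.one_le_iff_ne_zero]
  rintro rfl
  exact hn (by simpa using h)

end Squarefree

section Summability

variable {ι κ : Type*}

theorem summable_mul_subtype_iff {f : κ → ℝ} {g : ι → ℝ} {T : Set (κ × ι)} {x : κ}
    (hf : Summable f) (hx : f x ≠ 0) (hT : ∀ i, (x, i) ∈ T) :
    Summable (fun q : T ↦ f q.1.1 * g q.1.2) ↔ Summable g := by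
  refine ⟨fun h ↦ ?_, fun h ↦ (summable_mul_of_summable_norm hf.norm h.norm).subtype T⟩
  have hinj : Function.Injective fun i ↦ (⟨(x, i), hT i⟩ : T) := fun _ _ hij ↦
    congrArg (fun q : T ↦ q.1.2) hij
  exact (summable_mul_left_iff hx).mp (h.comp_injective hinj)

/-- Passage to the complementary divisor `t ↦ m i / t` in each fibre of the set of pairs
`(t, i)` with `t ∣ m i`. -/
def complementaryDivisor {m : ι → ℕ} (hm : ∀ i, m i ≠ 0) :
    Equiv.Perm {q : ℕ × ι | q.1 ∣ m q.2} :=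
  Function.Involutive.toPerm
    (fun q ↦ ⟨(m q.1.2 / q.1.1, q.1.2), Nat.div_dvd_of_dvd q.2⟩)
    fun q ↦ Subtype.ext (Prod.ext (Nat.div_div_self q.2 (hm q.1.2)) rfl)

theorem summable_div_rpow_neg_mul_iff {m : ι → ℕ} (hm : ∀ i, m i ≠ 0) {x : ℝ} (hx : 1 < x)
    (g : ι → ℝ) :
    Summable (fun q : {q : ℕ × ι | q.1 ∣ m q.2} ↦
      ((m q.1.2 / q.1.1 : ℕ) : ℝ) ^ (-x) * g q.1.2) ↔ Summable g := by
  have hzeta : Summable fun d : ℕ ↦ (d : ℝ) ^ (-x) := Real.summable_nat_rpow.mpr (by linarith)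
  have hone : ((1 : ℕ) : ℝ) ^ (-x) ≠ 0 := by simp
  have hmem (i : ι) : (1, i) ∈ {q : ℕ × ι | q.1 ∣ m q.2} := one_dvd (m i)
  rw [← summable_mul_subtype_iff hzeta hone hmem,
    ← (complementaryDivisor hm).summable_iff (f := fun q ↦ (q.1.1 : ℝ) ^ (-x) * g q.1.2)]
  rfl

theorem rpow_mul_abs_mul_sq_rpow_neg {t d : ℝ} (ht : 0 < t) (hd : 0 ≤ d) (s k : ℝ) :
    t ^ (2 * k) * |s * (t * d) ^ 2| ^ (-k) = d ^ (-(2 * k)) * |s| ^ (-k) := by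
  have hsq : ((t * d) ^ 2) ^ (-k) = t ^ (-(2 * k)) * d ^ (-(2 * k)) := by
    rw [← Real.rpow_natCast_mul (by positivity), Real.mul_rpow ht.le hd]
    push_cast
    rw [mul_neg]
  have hcancel : t ^ (2 * k) * t ^ (-(2 * k)) = 1 := by
    rw [← Real.rpow_add ht, add_neg_cancel, Real.rpow_zero]
  rw [abs_mul, abs_sq, Real.mul_rpow (abs_nonneg s) (sq_nonneg _), hsq]
  linear_combination d ^ (-(2 * k)) * |s| ^ (-k) * hcancel

theorem summable_sq_dvd_iff_summable_sqfreePart {sq : ℤ → ℤ} (hsq : IsSqfreePart sq)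
    {n : ι → ℤ} (hn : ∀ i, n i ≠ 0) {k : ℝ} (hk : 1 / 2 < k) (w : ι → ℝ) :
    Summable (fun q : {q : ℕ × ι | (q.1 : ℤ) ^ 2 ∣ n q.2} ↦
      (q.1.1 : ℝ) ^ (2 * k) * |(n q.1.2 : ℝ)| ^ (-k) * w q.1.2) ↔
    Summable fun i ↦ |(sq (n i) : ℝ)| ^ (-k) * w i := by
  have hfactor (i : ι) : ∃ m : ℕ, n i = sq (n i) * (m : ℤ) ^ 2 :=
    let ⟨hsqf, _, hr⟩ := hsq (n i) (hn i)
    exists_nat_eq_squarefree_mul_sq hsqf hr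
  choose m hnm using hfactor
  have hm (i : ι) : m i ≠ 0 := fun h0 ↦ hn i (by rw [hnm i, h0]; simp)
  have hindex : {q : ℕ × ι | (q.1 : ℤ) ^ 2 ∣ n q.2} = {q | q.1 ∣ m q.2} := by
    ext q
    change (q.1 : ℤ) ^ 2 ∣ n q.2 ↔ q.1 ∣ m q.2
    rw [hnm, sq_dvd_squarefree_mul_sq_iff (hsq _ (hn q.2)).1, Int.natCast_dvd_natCast]
  rw [hindex, ← summable_div_rpow_neg_mul_iff hm (by linarith : 1 < 2 * k)]
  refine summable_congr fun ⟨(t, i), (hti : t ∣ m i)⟩ ↦ ?_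
  have ht : 0 < t := Nat.pos_of_dvd_of_pos hti (Nat.pos_of_ne_zero (hm i))
  have hni : (n i : ℝ) = sq (n i) * ((t : ℝ) * (m i / t : ℕ)) ^ 2 := by
    rw [← Nat.cast_mul, Nat.mul_div_cancel' hti]
    exact_mod_cast hnm i
  have hterm := rpow_mul_abs_mul_sq_rpow_neg (Nat.cast_pos.mpr ht)
    (Nat.cast_nonneg (m i / t)) (sq (n i)) k
  rw [← hni] at hterm
  rw [← mul_assoc, hterm]

end Summability

/-- The index set of `R_E(j,k,X)` as pairs of some `t` and an index of `S_E(j,k,X)`; the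
condition `1 ≤ t` follows from `t² ∣ F(u,v) ≠ 0`. -/
def equivRIdx (a b c : ℤ) (X : Set ℝ) :
    {q : ℕ × SIdx a b c X | (q.1 : ℤ) ^ 2 ∣ Fbin a b c q.2.1.1 q.2.1.2} ≃ RIdx a b c X where
  toFun q := ⟨(q.1.1, q.1.2.1), one_le_of_sq_dvd q.1.2.2.1.2 q.2, q.1.2.2.1,
    q.1.2.2.2, q.2⟩
  invFun q := ⟨(q.1.1, ⟨q.1.2, q.2.2.1, q.2.2.2.1⟩), q.2.2.2.2⟩
  left_inv _ := rfl
  right_inv _ := rfl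

theorem RConv_iff_SConv_general (a b c : ℤ) (sq : ℤ → ℤ) (hsq : IsSqfreePart sq) (j k : ℝ)
    (hk : 1 / 2 < k) (X : Set ℝ) : RConv a b c j k X ↔ SConv a b c sq j k X :=
  (equivRIdx a b c X).summable_iff.symm.trans <|
    summable_sq_dvd_iff_summable_sqfreePart hsq (fun p : SIdx a b c X ↦ p.2.1.2) hk
      fun p ↦ ht p.1.1 p.1.2 ^ (-j)

/-- **Proposition 10(ii).** If `k > 1/2`, `j ≥ 0`, and `X ⊆ ℝ`, then `R_E(j,k,X)`
is summable if and only if `S_E(j,k,X)` is summable. -/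
theorem RConv_iff_SConv (a b c : ℤ) (hf : DistinctRoots a b c)
    (sq : ℤ → ℤ) (hsq : IsSqfreePart sq) (j k : ℝ) (hk : 1/2 < k) (hj : 0 ≤ j)
    (X : Set ℝ) :
    RConv a b c j k X ↔ SConv a b c sq j k X :=
  RConv_iff_SConv_general a b c sq hsq j k hk X
end

section
/- Suppose (u,v) ∈ Ψ, t is a positive integer, and t² divides F(u,v). Then there exist unique positive integers d, d' and a unique α ∈ Ω_d such that gcd(d,d') = 1, dd' = t, u ≡ αv (mod d²), and v ≡ 0 (mod d'²). -/
/-!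
Write `F(u, v) = v * G(u, v)` with `G(u, v) = v ^ 3 * f(u / v)`. Modulo `v` the form `G(u, v)` is
`u ^ 3`, so coprimality of `u` and `v` makes the two factors coprime, and a square dividing the
product splits uniquely as `t ^ 2 = d ^ 2 * d' ^ 2` with `d ^ 2 ∣ G(u, v)` and `d' ^ 2 ∣ v`.
Moreover `v` is then invertible modulo `d ^ 2`, and `d ^ 2 ∣ G(u, v)` says exactly that the only
candidate `α = u / v` is a root of `f` modulo `d ^ 2`. The argument works for every `f ∈ ℤ[X]` with
leading coefficient prime to `v`, and for `k`-th powers in place of squares.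

The value `G(u, v) = v ^ deg f * f(u / v)` of the homogenization of `f` is expressed as
`(f.scaleRoots v).eval u`.
-/

section CoprimeFactorization

theorem existsUnique_mul_eq_and_pow_dvd_of_coprime {m n t k : ℕ} (hmn : m.Coprime n) (hk : k ≠ 0)
    (ht : t ^ k ∣ m * n) :
    ∃! p : ℕ × ℕ, p.1 * p.2 = t ∧ p.1 ^ k ∣ m ∧ p.2 ^ k ∣ n := by
  obtain ⟨d, d', hd, hd', rfl⟩ := exists_dvd_and_dvd_of_dvd_mul ((dvd_pow_self t hk).trans ht)
  have hdn : (d ^ k).Coprime n := (hmn.coprime_dvd_left hd).pow_left k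
  have hdm' : (d' ^ k).Coprime m := (hmn.symm.coprime_dvd_left hd').pow_left k
  rw [mul_pow] at ht
  refine ⟨(d, d'), ⟨rfl, hdn.dvd_of_dvd_mul_right (dvd_of_mul_right_dvd ht),
    hdm'.dvd_of_dvd_mul_left (dvd_of_mul_left_dvd ht)⟩, ?_⟩
  rintro ⟨e, e'⟩ ⟨he_mul, he_pow, he_pow'⟩
  have he : e ∣ m := (dvd_pow_self e hk).trans he_pow
  have he' : e' ∣ n := (dvd_pow_self e' hk).trans he_pow'
  have e_eq : e = d := by
    rw [← Nat.gcd_mul_of_coprime_of_dvd (hmn.symm.coprime_dvd_left he') he,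
      ← Nat.gcd_mul_of_coprime_of_dvd (hmn.symm.coprime_dvd_left hd') hd,
      mul_comm e', he_mul, mul_comm d']
  have e_eq' : e' = d' := by
    rw [← Nat.gcd_mul_of_coprime_of_dvd (hmn.coprime_dvd_left he) he',
      ← Nat.gcd_mul_of_coprime_of_dvd (hmn.coprime_dvd_left hd) hd', he_mul]
  rw [e_eq, e_eq']

theorem existsUnique_mul_eq_and_pow_dvd_of_isCoprime {m n : ℤ} {t k : ℕ} (hmn : IsCoprime m n)
    (hk : k ≠ 0) (ht : (t : ℤ) ^ k ∣ m * n) :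
    ∃! p : ℕ × ℕ, p.1 * p.2 = t ∧ (p.1 : ℤ) ^ k ∣ m ∧ (p.2 : ℤ) ^ k ∣ n := by
  simp only [← Nat.cast_pow, Int.natCast_dvd, Int.natAbs_mul] at ht ⊢
  exact existsUnique_mul_eq_and_pow_dvd_of_coprime (Int.isCoprime_iff_nat_coprime.mp hmn) hk ht

end CoprimeFactorization

section ScaleRoots

open Polynomial

variable {R S : Type*} [CommRing R] [CommRing S] [Algebra R S]

theorem dvd_eval_scaleRoots_sub_leadingCoeff_mul_pow (f : R[X]) (u v : R) :
    v ∣ (f.scaleRoots v).eval u - f.leadingCoeff * u ^ f.natDegree := by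
  rw [eval_eq_sum_range, natDegree_scaleRoots, Finset.sum_range_succ, coeff_scaleRoots_natDegree,
    add_sub_cancel_right]
  refine Finset.dvd_sum fun i hi ↦ ?_
  have exponent_ne_zero : f.natDegree - i ≠ 0 := Nat.sub_ne_zero_of_lt (Finset.mem_range.mp hi)
  rw [coeff_scaleRoots]
  exact ((dvd_pow_self v exponent_ne_zero).mul_left _).mul_right _

theorem isCoprime_eval_scaleRoots {f : R[X]} {u v : R} (huv : IsCoprime u v)
    (hf : IsCoprime f.leadingCoeff v) : IsCoprime ((f.scaleRoots v).eval u) v := by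
  obtain ⟨w, hw⟩ := dvd_eval_scaleRoots_sub_leadingCoeff_mul_pow f u v
  rw [sub_eq_iff_eq_add'.mp hw]
  exact (hf.mul_left huv.pow_left).add_mul_left_left w

theorem algebraMap_eval_scaleRoots (f : R[X]) {u v : R} {α : S}
    (hα : algebraMap R S u = α * algebraMap R S v) :
    algebraMap R S ((f.scaleRoots v).eval u) = algebraMap R S v ^ f.natDegree * aeval α f := by
  rw [← aeval_algebraMap_apply_eq_algebraMap_eval, hα, mul_comm α, aeval_def,
    scaleRoots_eval₂_mul, aeval_def]

theorem existsUnique_aeval_eq_zero_of_algebraMap_eval_scaleRoots_eq_zero {f : R[X]} {u v : R}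
    (hv : IsUnit (algebraMap R S v)) (h : algebraMap R S ((f.scaleRoots v).eval u) = 0) :
    ∃! α : S, aeval α f = 0 ∧ algebraMap R S u = α * algebraMap R S v := by
  obtain ⟨α, hα⟩ : ∃ α, algebraMap R S u = α * algebraMap R S v := exists_eq_mul_left_of_dvd hv.dvd
  refine ⟨α, ⟨?_, hα⟩, fun β hβ ↦ hv.mul_right_cancel (hβ.2.symm.trans hα)⟩
  rwa [algebraMap_eval_scaleRoots f hα, (hv.pow _).mul_right_eq_zero] at h

theorem natCast_dvd_eval_scaleRoots_of_aeval_eq_zero {f : ℤ[X]} {u v : ℤ} {n : ℕ} {α : ZMod n}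
    (hα : aeval α f = 0) (huv : (u : ZMod n) = α * v) : (n : ℤ) ∣ (f.scaleRoots v).eval u := by
  rw [← ZMod.intCast_zmod_eq_zero_iff_dvd, ← eq_intCast (algebraMap ℤ (ZMod n)),
    algebraMap_eval_scaleRoots f (by simpa using huv), hα, mul_zero]

theorem existsUnique_aeval_eq_zero_of_natCast_dvd_eval_scaleRoots {f : ℤ[X]} {u v : ℤ} {n : ℕ}
    (huv : IsCoprime u v) (hf : IsCoprime f.leadingCoeff v)
    (hn : (n : ℤ) ∣ (f.scaleRoots v).eval u) :
    ∃! α : ZMod n, aeval α f = 0 ∧ (u : ZMod n) = α * v := by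
  have hv : IsUnit (v : ZMod n) := (ZMod.coe_int_isUnit_iff_isCoprime v n).mpr
    ((isCoprime_eval_scaleRoots huv hf).of_isCoprime_of_dvd_left hn)
  exact existsUnique_aeval_eq_zero_of_algebraMap_eval_scaleRoots_eq_zero (R := ℤ) hv
    ((ZMod.intCast_zmod_eq_zero_iff_dvd _ n).mpr hn)

theorem exists_unique_triple_general {f : ℤ[X]} {u v : ℤ} {t k : ℕ} (huv : IsCoprime u v)
    (hf : IsCoprime f.leadingCoeff v) (hk : k ≠ 0) (ht : 0 < t)
    (hdvd : (t : ℤ) ^ k ∣ v * (f.scaleRoots v).eval u) :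
    ∃! x : Σ d : ℕ, ℕ × ZMod (d ^ k),
      0 < x.1 ∧ 0 < x.2.1 ∧ Nat.Coprime x.1 x.2.1 ∧ x.1 * x.2.1 = t ∧
        aeval x.2.2 f = 0 ∧ (u : ZMod (x.1 ^ k)) = x.2.2 * v ∧ (x.2.1 : ℤ) ^ k ∣ v := by
  have hcop := isCoprime_eval_scaleRoots huv hf
  rw [mul_comm] at hdvd
  obtain ⟨⟨d, d'⟩, ⟨rfl, hd, hd'⟩, unique_pair⟩ :=
    existsUnique_mul_eq_and_pow_dvd_of_isCoprime hcop hk hdvd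
  have hdd' : d.Coprime d' := Nat.isCoprime_iff_coprime.mp
    ((hcop.of_isCoprime_of_dvd_left ((dvd_pow_self _ hk).trans hd)).of_isCoprime_of_dvd_right
      ((dvd_pow_self _ hk).trans hd'))
  obtain ⟨α, ⟨hroot, hα⟩, unique_root⟩ :=
    existsUnique_aeval_eq_zero_of_natCast_dvd_eval_scaleRoots (n := d ^ k) huv hf (mod_cast hd)
  refine ⟨⟨d, d', α⟩, ⟨Nat.pos_of_mul_pos_right ht, Nat.pos_of_mul_pos_left ht, hdd', rfl, hroot,
    hα, hd'⟩, ?_⟩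
  rintro ⟨e, e', β⟩ ⟨-, -, -, he_mul, hβ_root, hβ, he'⟩
  have he : (e : ℤ) ^ k ∣ (f.scaleRoots v).eval u :=
    mod_cast natCast_dvd_eval_scaleRoots_of_aeval_eq_zero hβ_root hβ
  obtain ⟨rfl, rfl⟩ := Prod.mk.inj (unique_pair (e, e') ⟨he_mul, he, he'⟩)
  rw [unique_root β ⟨hβ_root, hβ⟩]

end ScaleRoots

section Cubic

variable (a b c : ℤ)

theorem Fbin_eq_mul_eval_scaleRoots (u v : ℤ) :
    Fbin a b c u v = v * ((Cubic.mk 1 a b c).toPoly.scaleRoots v).eval u := by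
  have hdeg : (Cubic.mk 1 a b c).toPoly.natDegree = 3 := Cubic.natDegree_of_a_ne_zero' one_ne_zero
  simp only [Fbin, Polynomial.eval_eq_sum_range, Polynomial.natDegree_scaleRoots, hdeg,
    Polynomial.coeff_scaleRoots, Finset.sum_range_succ, Finset.sum_range_zero, Cubic.coeff_eq_a,
    Cubic.coeff_eq_b, Cubic.coeff_eq_c, Cubic.coeff_eq_d]
  ring

theorem mem_OmegaSet_iff_aeval_eq_zero {d : ℕ} {α : ZMod (d ^ 2)} :
    α ∈ OmegaSet a b c d ↔ Polynomial.aeval α (Cubic.mk 1 a b c).toPoly = 0 := by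
  simp [OmegaSet, Cubic.toPoly]

end Cubic

/-- **Lemma 12.** If `(u,v) ∈ Ψ`, `t ≥ 1`, and `t² ∣ F(u,v)`, then there is a unique
triple `(α, d, d')` with `d, d'` coprime positive integers, `dd' = t`, `α ∈ Ω_d`,
`u ≡ αv (mod d²)`, and `v ≡ 0 (mod d'²)`. -/
theorem exists_unique_triple (a b c : ℤ) (hf : DistinctRoots a b c)
    (u v : ℤ) (huv : (u, v) ∈ Psi a b c) (t : ℕ) (htpos : 0 < t)
    (hdvd : (t : ℤ)^2 ∣ Fbin a b c u v) :
    ∃! x : Σ d : ℕ, ℕ × ZMod (d^2),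
      0 < x.1 ∧ 0 < x.2.1 ∧ Nat.Coprime x.1 x.2.1 ∧ x.1 * x.2.1 = t ∧
        x.2.2 ∈ OmegaSet a b c x.1 ∧
        (u : ZMod (x.1^2)) = x.2.2 * (v : ZMod (x.1^2)) ∧ ((x.2.1 : ℤ))^2 ∣ v := by
  simp only [Fbin_eq_mul_eval_scaleRoots, mem_OmegaSet_iff_aeval_eq_zero] at hdvd ⊢
  exact exists_unique_triple_general (Int.isCoprime_iff_gcd_eq_one.mpr huv.1)
    (by simp [Cubic.monic_of_a_eq_one'.leadingCoeff, isCoprime_one_left]) two_ne_zero htpos hdvd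
end

section
/- For every positive integer t, the set {(u,v) ∈ Ψ : t² divides F(u,v)} is the disjoint union, over pairs of coprime positive integers (d,d') with dd' = t and over α ∈ Ω_d, of the sets Ψ ∩ L_{α,d,d'}. -/
/-!
Write `F(u, v) = v * G(u, v)` with `G` the homogenization of `f`. When `u` and `v` are coprime, so
are `v` and `G(u, v)`, since `G(u, v) ≡ u³ (mod v)`. Hence `t² ∣ F(u, v)` exactly when `t = d * d'`
with `d² ∣ G(u, v)` and `d'² ∣ v`. Modulo `d²` the integer `v` is then a unit, and
`G(αv, v) = v³ f(α)` says that `α = u / v` is a root of `f`. The triple can be recovered from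
`(u, v)`: `d' = gcd(t, v)`, `d = t / d'`, and `α = u / v` in `ℤ/d²ℤ`.
-/

theorem exists_mul_eq_of_pow_dvd_mul {M : Type*} [CommMonoid M] [DecompositionMonoid M]
    {t m n : M} {k : ℕ} (hk : k ≠ 0) (hmn : IsRelPrime m n) (ht : t ^ k ∣ m * n) :
    ∃ d e : M, IsRelPrime d e ∧ d * e = t ∧ d ^ k ∣ m ∧ e ^ k ∣ n := by
  obtain ⟨d, e, hdm, hen, rfl⟩ := exists_dvd_and_dvd_of_dvd_mul ((dvd_pow_self t hk).trans ht)
  rw [mul_pow] at ht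
  refine ⟨d, e, (hmn.of_dvd_left hdm).of_dvd_right hen, rfl, ?_, ?_⟩
  · exact (hmn.of_dvd_left hdm).pow_left.dvd_of_dvd_mul_right (dvd_of_mul_right_dvd ht)
  · exact (hmn.of_dvd_right hen).symm.pow_left.dvd_of_dvd_mul_left (dvd_of_mul_left_dvd ht)

section CubicForm

variable {R : Type*} [CommRing R]

/-- The homogenization `v³ f(u/v)` of `f(x) = x³ + ax² + bx + c`, over any commutative ring so that
it can be reduced modulo `d²`; `f(x)` itself is `cubicForm a b c x 1`. -/
def cubicForm (a b c u v : R) : R := u ^ 3 + a * u ^ 2 * v + b * u * v ^ 2 + c * v ^ 3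

theorem cubicForm_mul_self (a b c x v : R) :
    cubicForm a b c (x * v) v = v ^ 3 * cubicForm a b c x 1 := by
  unfold cubicForm
  ring

theorem isCoprime_cubicForm (a b c : R) {u v : R} (huv : IsCoprime u v) :
    IsCoprime v (cubicForm a b c u v) := by
  have hcubic : cubicForm a b c u v = u ^ 3 + v * (a * u ^ 2 + b * u * v + c * v ^ 2) := by
    unfold cubicForm
    ring
  rw [hcubic]
  exact huv.symm.pow_right.add_mul_left_right _

theorem isUnit_of_cubicForm_eq_zero {a b c u v : R} (huv : IsCoprime u v)
    (h : cubicForm a b c u v = 0) : IsUnit v := by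
  rw [← isCoprime_zero_right, ← h]
  exact isCoprime_cubicForm a b c huv

theorem exists_eq_mul_of_cubicForm_eq_zero {a b c u v : R} (huv : IsCoprime u v)
    (h : cubicForm a b c u v = 0) : ∃ x, cubicForm a b c x 1 = 0 ∧ u = x * v := by
  have hv : IsUnit v := isUnit_of_cubicForm_eq_zero huv h
  obtain ⟨x, rfl⟩ : ∃ x, u = x * v := dvd_iff_exists_eq_mul_left.mp hv.dvd
  rw [cubicForm_mul_self] at h
  exact ⟨x, (hv.pow 3).mul_right_eq_zero.mp h, rfl⟩

theorem intCast_cubicForm (a b c u v : ℤ) :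
    ((cubicForm a b c u v : ℤ) : R) = cubicForm (a : R) b c u v := by
  simp [cubicForm]

end CubicForm

section Lattice

variable {a b c : ℤ} {t d d' : ℕ} {u v : ℤ} {α : ZMod (d ^ 2)} {p : ℤ × ℤ}

theorem Fbin_eq_mul_cubicForm : Fbin a b c u v = v * cubicForm a b c u v := rfl

theorem isCoprime_of_mem_Psi (hp : p ∈ Psi a b c) : IsCoprime p.1 p.2 :=
  Int.isCoprime_iff_gcd_eq_one.mpr hp.1

theorem mem_OmegaSet_iff :
    α ∈ OmegaSet a b c d ↔ cubicForm (a : ZMod (d ^ 2)) b c α 1 = 0 := by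
  simp [OmegaSet, cubicForm]

theorem sq_dvd_cubicForm_iff :
    (d : ℤ) ^ 2 ∣ cubicForm a b c u v ↔ cubicForm (a : ZMod (d ^ 2)) b c u v = 0 := by
  rw [← intCast_cubicForm, ZMod.intCast_zmod_eq_zero_iff_dvd, Nat.cast_pow]

theorem isUnit_intCast_of_mem_latL (hp : IsCoprime p.1 p.2) (hpL : p ∈ latL d d' α) :
    IsUnit (p.2 : ZMod (d ^ 2)) :=
  (hp.map (Int.castRingHom (ZMod (d ^ 2)))).symm.isUnit_of_dvd (Dvd.intro_left α hpL.1.symm)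

theorem gcd_mul_natAbs_of_mem_latL (hp : IsCoprime p.1 p.2) (hpL : p ∈ latL d d' α) :
    Nat.gcd (d * d') p.2.natAbs = d' := by
  have hd : Nat.Coprime d p.2.natAbs := by
    have hsq : IsCoprime ((d ^ 2 : ℕ) : ℤ) p.2 :=
      (ZMod.coe_int_isUnit_iff_isCoprime _ _).mp (isUnit_intCast_of_mem_latL hp hpL)
    exact (Int.isCoprime_iff_nat_coprime.mp hsq).coprime_dvd_left (dvd_pow_self d two_ne_zero)
  have hd' : d' ∣ p.2.natAbs := Int.natCast_dvd.mp ((dvd_pow_self _ two_ne_zero).trans hpL.2)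
  rw [hd.gcd_mul_left_cancel, Nat.gcd_eq_left hd']

theorem sq_dvd_Fbin_of_mem_latL (hα : α ∈ OmegaSet a b c d) (hpL : p ∈ latL d d' α) :
    ((d * d' : ℕ) : ℤ) ^ 2 ∣ Fbin a b c p.1 p.2 := by
  have hcubic : (d : ℤ) ^ 2 ∣ cubicForm a b c p.1 p.2 := by
    rw [sq_dvd_cubicForm_iff, hpL.1, cubicForm_mul_self, mem_OmegaSet_iff.mp hα, mul_zero]
  rw [Fbin_eq_mul_cubicForm, Nat.cast_mul, mul_pow, mul_comm]
  exact mul_dvd_mul hpL.2 hcubic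

theorem exists_mem_OmegaSet_of_sq_dvd_cubicForm (huv : IsCoprime u v)
    (hd : (d : ℤ) ^ 2 ∣ cubicForm a b c u v) :
    ∃ α ∈ OmegaSet a b c d, (u : ZMod (d ^ 2)) = α * v := by
  simp only [mem_OmegaSet_iff]
  exact exists_eq_mul_of_cubicForm_eq_zero (huv.map (Int.castRingHom (ZMod (d ^ 2))))
    (sq_dvd_cubicForm_iff.mp hd)

theorem exists_coprime_mul_eq_of_sq_dvd_Fbin (huv : IsCoprime u v)
    (ht : (t : ℤ) ^ 2 ∣ Fbin a b c u v) :
    ∃ d d' : ℕ, Nat.Coprime d d' ∧ d * d' = t ∧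
      (d : ℤ) ^ 2 ∣ cubicForm a b c u v ∧ (d' : ℤ) ^ 2 ∣ v := by
  have hcop : Nat.Coprime (cubicForm a b c u v).natAbs v.natAbs :=
    Int.isCoprime_iff_nat_coprime.mp (isCoprime_cubicForm a b c huv).symm
  rw [Fbin_eq_mul_cubicForm, mul_comm, ← Nat.cast_pow, Int.natCast_dvd, Int.natAbs_mul] at ht
  simpa only [← Nat.cast_pow, Int.natCast_dvd, Nat.coprime_iff_isRelPrime] using
    exists_mul_eq_of_pow_dvd_mul two_ne_zero (Nat.coprime_iff_isRelPrime.mp hcop) ht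

theorem exists_mem_latL_of_sq_dvd_Fbin (hp : p ∈ Psi a b c)
    (ht : (t : ℤ) ^ 2 ∣ Fbin a b c p.1 p.2) :
    ∃ x : TripSet a b c t, p ∈ latL x.1.1 x.1.2.1 x.1.2.2 := by
  have hcop := isCoprime_of_mem_Psi hp
  obtain ⟨d, d', hdd', rfl, hd, hd'⟩ := exists_coprime_mul_eq_of_sq_dvd_Fbin hcop ht
  obtain ⟨α, hα, hpα⟩ := exists_mem_OmegaSet_of_sq_dvd_cubicForm hcop hd
  have hne : d * d' ≠ 0 := by
    intro h
    rw [h, Nat.cast_zero, zero_pow two_ne_zero, zero_dvd_iff] at ht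
    exact hp.2 ht
  have hd_pos : 0 < d := Nat.pos_of_ne_zero (left_ne_zero_of_mul hne)
  have hd'_pos : 0 < d' := Nat.pos_of_ne_zero (right_ne_zero_of_mul hne)
  exact ⟨⟨⟨d, d', α⟩, hd_pos, hd'_pos, hdd', rfl, hα⟩, hpα, hd'⟩

theorem eq_of_mem_latL (hp : IsCoprime p.1 p.2) {x y : TripSet a b c t}
    (hx : p ∈ latL x.1.1 x.1.2.1 x.1.2.2) (hy : p ∈ latL y.1.1 y.1.2.1 y.1.2.2) : x = y := by
  obtain ⟨⟨d, d', α⟩, _, hd', _, hdt : d * d' = t, _⟩ := x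
  obtain ⟨⟨e, e', β⟩, _, _, _, het : e * e' = t, _⟩ := y
  obtain rfl : d' = e' := calc
    d' = Nat.gcd (d * d') p.2.natAbs := (gcd_mul_natAbs_of_mem_latL hp hx).symm
    _ = Nat.gcd (e * e') p.2.natAbs := by rw [hdt, het]
    _ = e' := gcd_mul_natAbs_of_mem_latL hp hy
  obtain rfl : d = e := Nat.eq_of_mul_eq_mul_right hd' (hdt.trans het.symm)
  obtain rfl : α = β :=
    (isUnit_intCast_of_mem_latL hp hx).mul_right_cancel (hx.1.symm.trans hy.1)
  rfl

end Lattice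

theorem psi_eq_disjoint_union_general (a b c : ℤ) (t : ℕ) :
    {p ∈ Psi a b c | (t : ℤ) ^ 2 ∣ Fbin a b c p.1 p.2} =
        (⋃ x : TripSet a b c t, Psi a b c ∩ latL x.1.1 x.1.2.1 x.1.2.2) ∧
      Pairwise (Function.onFun Disjoint
        fun x : TripSet a b c t => Psi a b c ∩ latL x.1.1 x.1.2.1 x.1.2.2) := by
  constructor
  · ext p
    rw [← Set.inter_iUnion, Set.mem_inter_iff, Set.mem_iUnion]
    refine and_congr_right fun hp => ⟨exists_mem_latL_of_sq_dvd_Fbin hp, ?_⟩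
    rintro ⟨⟨⟨d, d', α⟩, _, _, _, rfl, hα⟩, hpL⟩
    exact sq_dvd_Fbin_of_mem_latL hα hpL
  · intro x y hxy
    refine Set.disjoint_left.mpr fun p hx hy => hxy ?_
    exact eq_of_mem_latL (isCoprime_of_mem_Psi hx.1) hx.2 hy.2

/-- Equation (3): for every `t ≥ 1`, the set `{(u,v) ∈ Ψ : t² ∣ F(u,v)}` is the
disjoint union over coprime `(d, d')` with `dd' = t` and `α ∈ Ω_d` of the sets
`Ψ ∩ L_{α,d,d'}`. -/
theorem psi_eq_disjoint_union (a b c : ℤ) (hf : DistinctRoots a b c)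
    (t : ℕ) (htpos : 0 < t) :
    {p ∈ Psi a b c | (t : ℤ)^2 ∣ Fbin a b c p.1 p.2} =
        (⋃ x : TripSet a b c t, Psi a b c ∩ latL x.1.1 x.1.2.1 x.1.2.2) ∧
      Pairwise (Function.onFun Disjoint
        fun x : TripSet a b c t => Psi a b c ∩ latL x.1.1 x.1.2.1 x.1.2.2) :=
  psi_eq_disjoint_union_general a b c t
end

section
/- Let D be a nonzero squarefree integer and X ⊆ ℝ. Then the map (u,v) ↦ (u/v, √(F(u,v)/D)/v²) is a bijection from Σ_{D,X} := {(u,v) ∈ Ψ : u/v ∈ X, v > 0, and s(F(u,v)) = D} onto the set {(x,y) ∈ ℚ × ℚ : Dy² = f(x), y > 0, and x ∈ X} (which is in natural bijection with the set of rational points of E^{(D)} that are not 2-torsion and have x-coordinate in X, taken modulo ±1). -/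
/-!
Clearing denominators in `D y² = f(u/v)` gives `D (y v²)² = F(u,v)`. Hence `u/v` is the abscissa of
a rational point with `y > 0` exactly when `F(u,v)` is `D` times a nonzero rational square, which
for squarefree `D` means that `D` is the squarefree part of `F(u,v)`. The inverse map is therefore
`(x, y) ↦ (x.num, x.den)`, and `y` is recovered from `x` as the positive solution.
-/

/-- The set `Σ_{D,X}` of pairs `(u, v) ∈ Ψ` with `v > 0`, `u/v ∈ X` and `s(F(u,v)) = D`,
relative to a squarefree-part function `sq`. -/
def sigmaSet (a b c : ℤ) (sq : ℤ → ℤ) (D : ℤ) (X : Set ℝ) : Set (ℤ × ℤ) :=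
  {p | p ∈ Psi a b c ∧ (p.1 : ℝ) / (p.2 : ℝ) ∈ X ∧ 0 < p.2 ∧ sq (Fbin a b c p.1 p.2) = D}

/-- The rational points of the affine curve `D y² = f(x)` with `y > 0` and `x ∈ X`. When `f`
has distinct roots they represent, modulo `±1`, the points of `E^{(D)}` outside the 2-torsion with
`x`-coordinate in `X`. -/
def twistPoints (a b c D : ℤ) (X : Set ℝ) : Set (ℚ × ℚ) :=
  {q | (D : ℚ) * q.2 ^ 2 = q.1 ^ 3 + a * q.1 ^ 2 + b * q.1 + c ∧ 0 < q.2 ∧ (q.1 : ℝ) ∈ X}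

/-- The map `(u, v) ↦ (u/v, √(F(u,v)/D)/v²)`. Its square root is `Rat.sqrt`, which is the true
square root only on squares of rationals; `F(u,v)/D` is one for every `(u, v)` in `sigmaSet`. -/
def sigmaMap (a b c D : ℤ) (p : ℤ × ℤ) : ℚ × ℚ :=
  (p.1 / p.2, Rat.sqrt (Fbin a b c p.1 p.2 / D) / p.2 ^ 2)

/-- The numerator and denominator of the abscissa of a point; on `twistPoints` this is the inverse
of `sigmaMap`. -/
def numDen (q : ℚ × ℚ) : ℤ × ℤ := (q.1.num, q.1.den)

theorem eq_of_squarefree_of_eq_mul_sq {m n : ℤ} (hm : Squarefree m) (hn : Squarefree n) {r : ℚ}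
    (h : (m : ℚ) = n * r ^ 2) : m = n := by
  have hmn_rat : IsSquare ((m * n : ℤ) : ℚ) := ⟨n * r, by push_cast; rw [h]; ring⟩
  obtain ⟨k, hk⟩ : IsSquare (m * n) := Rat.isSquare_intCast_iff.mp hmn_rat
  obtain ⟨l, rfl⟩ : m ∣ k :=
    (hm.dvd_pow_iff_dvd two_ne_zero).mp ⟨n, by rw [hk, sq]⟩
  have hn_eq : n = m * (l * l) := mul_left_cancel₀ hm.ne_zero (by rw [hk]; ring)
  have hl : IsUnit l := hn l ⟨m, by rw [hn_eq]; ring⟩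
  rw [hn_eq, Int.isUnit_mul_self hl, mul_one]

theorem IsSqfreePart.exists_pos_mul_sq_eq {sq : ℤ → ℤ} (hsq : IsSqfreePart sq) {n : ℤ}
    (hn : n ≠ 0) : ∃ r : ℚ, 0 < r ∧ (sq n : ℚ) * r ^ 2 = n := by
  obtain ⟨-, m, hm⟩ := hsq n hn
  have hm_ne : m ≠ 0 := by
    rintro rfl
    exact hn (Int.cast_eq_zero.mp (hm.trans (by ring)))
  exact ⟨|m|, abs_pos.mpr hm_ne, by rw [sq_abs, hm]⟩

theorem IsSqfreePart.eq_of_mul_sq_eq {sq : ℤ → ℤ} (hsq : IsSqfreePart sq) {n D : ℤ} (hn : n ≠ 0)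
    (hD : Squarefree D) {r : ℚ} (h : (D : ℚ) * r ^ 2 = n) : sq n = D := by
  obtain ⟨hsq_n, m, hm⟩ := hsq n hn
  have hr_sq : r ^ 2 ≠ 0 := right_ne_zero_of_mul (h ▸ Int.cast_ne_zero.mpr hn)
  refine (eq_of_squarefree_of_eq_mul_sq hD hsq_n (r := m / r) ?_).symm
  rw [div_pow, ← mul_div_assoc, ← hm, ← h, mul_div_cancel_right₀ _ hr_sq]

theorem rat_sqrt_div_eq_of_mul_sq_eq {n D r : ℚ} (hD : D ≠ 0) (hr : 0 ≤ r) (h : D * r ^ 2 = n) :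
    Rat.sqrt (n / D) = r := by
  rw [← h, mul_div_cancel_left₀ _ hD, sq, Rat.sqrt_eq, abs_of_nonneg hr]

theorem mul_sq_eq_cubic_div_iff {K : Type*} [Field K] (a b c u : ℤ) {v : ℤ} (hv : (v : K) ≠ 0)
    (D y : K) :
    D * y ^ 2 = (u / v : K) ^ 3 + a * (u / v : K) ^ 2 + b * (u / v : K) + c ↔
      D * (y * v ^ 2) ^ 2 = Fbin a b c u v := by
  have hFbin : (Fbin a b c u v : K) =
      ((u / v : K) ^ 3 + a * (u / v : K) ^ 2 + b * (u / v : K) + c) * v ^ 4 := by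
    simp only [Fbin, Int.cast_mul, Int.cast_add, Int.cast_pow]
    field_simp
  rw [hFbin, show D * (y * v ^ 2) ^ 2 = D * y ^ 2 * (v : K) ^ 4 by ring,
    mul_left_inj' (pow_ne_zero 4 hv)]

section Bijection

variable {a b c D : ℤ} {sq : ℤ → ℤ} {X : Set ℝ}

theorem mul_sq_eq_Fbin_num_den {x y : ℚ} (h : D * y ^ 2 = x ^ 3 + a * x ^ 2 + b * x + c) :
    (D : ℚ) * (y * x.den ^ 2) ^ 2 = Fbin a b c x.num x.den := by
  have hden : ((x.den : ℤ) : ℚ) ≠ 0 := by exact_mod_cast x.den_ne_zero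
  refine (mul_sq_eq_cubic_div_iff a b c x.num hden D y).mp ?_
  rwa [Int.cast_natCast, Rat.num_div_den]

theorem mapsTo_sigmaMap (hsq : IsSqfreePart sq) :
    Set.MapsTo (sigmaMap a b c D) (sigmaSet a b c sq D X) (twistPoints a b c D X) := by
  rintro ⟨u, v⟩ ⟨⟨-, hF⟩, hX, hv, rfl⟩
  have hv_ne : (v : ℚ) ≠ 0 := by exact_mod_cast hv.ne'
  obtain ⟨r, hr, hDr⟩ := hsq.exists_pos_mul_sq_eq hF
  have hsqrt := rat_sqrt_div_eq_of_mul_sq_eq (Int.cast_ne_zero.mpr (hsq _ hF).1.ne_zero) hr.le hDr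
  simp only [sigmaMap, twistPoints, Set.mem_ofPred_eq, hsqrt]
  refine ⟨?_, by positivity, by exact_mod_cast hX⟩
  rwa [mul_sq_eq_cubic_div_iff a b c u hv_ne, div_mul_cancel₀ _ (pow_ne_zero 2 hv_ne)]

theorem mapsTo_numDen (hsq : IsSqfreePart sq) (hD : Squarefree D) :
    Set.MapsTo numDen (twistPoints a b c D X) (sigmaSet a b c sq D X) := by
  rintro ⟨x, y⟩ ⟨hxy, hy, hX⟩
  have hD_ne : (D : ℚ) ≠ 0 := Int.cast_ne_zero.mpr hD.ne_zero
  have hr : 0 < y * (x.den : ℚ) ^ 2 := mul_pos hy (pow_pos (mod_cast x.den_pos) 2)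
  have hDr := mul_sq_eq_Fbin_num_den hxy
  have hF : Fbin a b c x.num x.den ≠ 0 := by
    rw [← Int.cast_ne_zero (α := ℚ), ← hDr]
    exact mul_ne_zero hD_ne (pow_ne_zero 2 hr.ne')
  refine ⟨⟨x.reduced, hF⟩, ?_, Int.natCast_pos.mpr x.den_pos, hsq.eq_of_mul_sq_eq hF hD hDr⟩
  simpa only [numDen, Int.cast_natCast, ← Rat.cast_def] using hX

theorem leftInvOn_numDen_sigmaMap :
    Set.LeftInvOn numDen (sigmaMap a b c D) (sigmaSet a b c sq D X) := by
  rintro ⟨u, v⟩ ⟨⟨hgcd, -⟩, -, hv, -⟩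
  exact Prod.ext (Rat.num_div_eq_of_coprime hv hgcd) (Rat.den_div_eq_of_coprime hv hgcd)

theorem rightInvOn_numDen_sigmaMap (hD : D ≠ 0) :
    Set.RightInvOn numDen (sigmaMap a b c D) (twistPoints a b c D X) := by
  rintro ⟨x, y⟩ ⟨hxy, hy, -⟩
  have hden : (x.den : ℚ) ≠ 0 := by exact_mod_cast x.den_ne_zero
  have hsqrt := rat_sqrt_div_eq_of_mul_sq_eq (Int.cast_ne_zero.mpr hD)
    (mul_nonneg hy.le (sq_nonneg _)) (mul_sq_eq_Fbin_num_den hxy)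
  simp only [sigmaMap, numDen, hsqrt, Int.cast_natCast, Rat.num_div_den,
    mul_div_cancel_right₀ _ (pow_ne_zero 2 hden)]

end Bijection

theorem sigma_bijection_general (a b c : ℤ) {sq : ℤ → ℤ} (hsq : IsSqfreePart sq) {D : ℤ}
    (hD : Squarefree D) (X : Set ℝ) :
    Set.BijOn (sigmaMap a b c D) (sigmaSet a b c sq D X) (twistPoints a b c D X) :=
  Set.InvOn.bijOn ⟨leftInvOn_numDen_sigmaMap, rightInvOn_numDen_sigmaMap hD.ne_zero⟩
    (mapsTo_sigmaMap hsq) (mapsTo_numDen hsq hD)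

/-- **Lemma 3.** For `D` squarefree and `X ⊆ ℝ`, the map
`(u,v) ↦ (u/v, √(F(u,v)/D)/v²)` is a bijection from
`Σ_{D,X} = {(u,v) ∈ Ψ : u/v ∈ X, v > 0, s(F(u,v)) = D}` onto
`{(x,y) ∈ ℚ² : Dy² = f(x), y > 0, x ∈ X}`; the image of `(u,v)` is the unique
point with first coordinate `u/v`. -/
theorem sigma_bijection (a b c : ℤ) (hf : DistinctRoots a b c)
    (sq : ℤ → ℤ) (hsq : IsSqfreePart sq) (D : ℤ) (hD : Squarefree D) (X : Set ℝ) :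
    ∃ φ : {p : ℤ × ℤ // p ∈ Psi a b c ∧ ((p.1 : ℝ) / (p.2 : ℝ)) ∈ X ∧ 0 < p.2 ∧
            sq (Fbin a b c p.1 p.2) = D} →
          {q : ℚ × ℚ // (D : ℚ) * q.2^2 = q.1^3 + a*q.1^2 + b*q.1 + c ∧ 0 < q.2 ∧
            ((q.1 : ℝ)) ∈ X},
      Function.Bijective φ ∧
        ∀ p, ((φ p : ℚ × ℚ)).1 = ((p : ℤ × ℤ).1 : ℚ) / ((p : ℤ × ℤ).2 : ℚ) := by
  have h := sigma_bijection_general a b c hsq hD X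
  exact ⟨h.mapsTo.restrict, h.bijective, fun _ ↦ rfl⟩
end

section
/- There exists a constant C (depending only on a, b, c) such that for every positive integer d, the number of α ∈ ℤ/d²ℤ with f(α) ≡ 0 (mod d²) is at most C·3^{ν(d)}, where ν(d) is the number of distinct prime divisors of d. -/
/-! The bound holds for every primitive integer polynomial `f` that is separable over `ℚ`.
Primitivity bounds the number of roots modulo a prime by the degree, and separability gives a
Bézout identity `u f + v f' = D` with a nonzero integer `D`. Let `p ^ e` be the exact power of the
prime `p` dividing `D`. A quantitative form of uniqueness in Hensel's lemma says that two roots of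
`f` modulo `p ^ m` agreeing modulo `p ^ (e + 1)` agree modulo `p ^ (m - e)`. So each root modulo `p`
lifts to at most `p ^ e` residues modulo `p ^ (e + 1)`, and each of these to at most `p ^ e` roots
modulo `p ^ m`. Multiplying over the primes dividing the modulus `n`, the Chinese remainder theorem
yields at most `D ^ 2 * (deg f) ^ ν(n)` roots modulo `n`. -/

open Polynomial

section Bezout

variable {R : Type*} [CommRing R]

theorem exists_mul_add_mul_eq_C_of_isCoprime_map {S : Type*} [CommRing S] [IsDomain S]
    {φ : R →+* S} (hφ : Function.Injective φ) {f g : R[X]} (h : IsCoprime (f.map φ) (g.map φ)) :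
    ∃ u v : R[X], ∃ D : R, D ≠ 0 ∧ u * f + v * g = C D := by
  by_cases hdeg : f.natDegree = 0 ∧ g.natDegree = 0
  · obtain ⟨a, rfl⟩ := natDegree_eq_zero.mp hdeg.1
    obtain ⟨b, rfl⟩ := natDegree_eq_zero.mp hdeg.2
    by_cases ha : a = 0
    · refine ⟨0, 1, b, ?_, by simp⟩
      rintro rfl
      exact not_isCoprime_zero_zero (by simpa [ha] using h)
    · exact ⟨1, 0, a, ha, by simp⟩
  · have hres : f.resultant g ≠ 0 := by
      have hmap := resultant_ne_zero _ _ h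
      rw [natDegree_map_eq_of_injective hφ, natDegree_map_eq_of_injective hφ,
        resultant_map_map] at hmap
      exact ne_zero_of_map hmap
    obtain ⟨u, v, -, -, huv⟩ :=
      exists_mul_add_mul_eq_C_resultant f g le_rfl le_rfl (not_and_or.mp hdeg)
    exact ⟨u, v, f.resultant g, hres, by rw [← huv, mul_comm u, mul_comm v]⟩

variable [IsDomain R] {p : R} {e k : ℕ}

theorem pow_dvd_of_pow_add_dvd_mul {a b : R} (hp : Prime p) (hb : ¬ p ^ (e + 1) ∣ b)
    (hab : p ^ (k + e) ∣ a * b) : p ^ k ∣ a := by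
  have hbe : emultiplicity p b ≤ e :=
    Order.le_of_lt_add_one (by exact_mod_cast emultiplicity_lt_iff_not_dvd.mpr hb)
  rw [pow_dvd_iff_le_emultiplicity] at hab ⊢
  rw [emultiplicity_mul hp, Nat.cast_add] at hab
  exact (ENat.add_le_add_iff_right (ENat.natCast_ne_top e)).mp (hab.trans (by gcongr))

theorem pow_dvd_sub_of_pow_dvd_eval {f u v : R[X]} {D x y : R}
    (hp : Prime p) (hbezout : u * f + v * derivative f = C D) (hD : ¬ p ^ (e + 1) ∣ D)
    (hx : p ^ (e + k + 1) ∣ f.eval x) (hy : p ^ (e + k + 1) ∣ f.eval y)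
    (hxy : p ^ (e + 1) ∣ y - x) : p ^ (k + 1) ∣ y - x := by
  obtain ⟨c, hc⟩ := f.exists_mul_sq_add_linear_part_eq_eval_add x (y - x)
  rw [add_sub_cancel] at hc
  have hfactor : (y - x) * (c * (y - x) + f.derivative.eval x) = f.eval y - f.eval x := by
    linear_combination hc
  have hslope : ¬ p ^ (e + 1) ∣ c * (y - x) + f.derivative.eval x := by
    intro hdvd
    have hderiv : p ^ (e + 1) ∣ f.derivative.eval x :=
      (dvd_add_right (hxy.mul_left c)).mp hdvd
    have hfx : p ^ (e + 1) ∣ f.eval x := (pow_dvd_pow p (by lia)).trans hx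
    have hDx : u.eval x * f.eval x + v.eval x * f.derivative.eval x = D := by
      simpa using congrArg (eval x) hbezout
    exact hD (hDx ▸ (hfx.mul_left _).add (hderiv.mul_left _))
  refine pow_dvd_of_pow_add_dvd_mul hp hslope ?_
  rw [hfactor, show k + 1 + e = e + k + 1 by lia]
  exact dvd_sub hy hx

end Bezout

theorem ncard_le_ncard_mul_div_of_castHom {n k l : ℕ} [NeZero n] (hk : k ∣ n) (hl : l ∣ n)
    {S : Set (ZMod n)} {T : Set (ZMod k)} (hST : Set.MapsTo (ZMod.castHom hk (ZMod k)) S T)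
    (hfiber : ∀ x ∈ S, ∀ y ∈ S, ZMod.castHom hk (ZMod k) x = ZMod.castHom hk (ZMod k) y →
      ZMod.castHom hl (ZMod l) x = ZMod.castHom hl (ZMod l) y) :
    S.ncard ≤ T.ncard * (n / l) := by
  have : NeZero k := ⟨ne_zero_of_dvd_ne_zero (NeZero.ne n) hk⟩
  rw [← Finset.card_range (n / l), ← Set.ncard_coe_finset, ← Set.ncard_prod]
  refine Set.ncard_le_ncard_of_injOn (fun x ↦ (ZMod.castHom hk (ZMod k) x, x.val / l)) ?_ ?_
    (T.toFinite.prod (Finset.finite_toSet _))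
  · intro x hx
    exact ⟨hST hx, by simpa using Nat.div_lt_div_of_lt_of_dvd hl x.val_lt⟩
  · intro x hx y hy hxy
    obtain ⟨hcast, hdiv⟩ := Prod.mk.inj hxy
    have hmod : x.val % l = y.val % l := by
      have hcast_l := hfiber x hx y hy hcast
      rwa [ZMod.castHom_apply, ZMod.castHom_apply, ZMod.cast_eq_val, ZMod.cast_eq_val,
        ZMod.natCast_eq_natCast_iff'] at hcast_l
    apply ZMod.val_injective n
    rw [← Nat.div_add_mod x.val l, ← Nat.div_add_mod y.val l, hdiv, hmod]

theorem map_castRingHom_zmod_ne_zero_of_isPrimitive {f : ℤ[X]} (hf : f.IsPrimitive)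
    {p : ℕ} (hp : p ≠ 1) :
    f.map (Int.castRingHom (ZMod p)) ≠ 0 := by
  intro hmap
  have hdvd : C (p : ℤ) ∣ f := by
    refine (C_dvd_iff_dvd_coeff _ _).mpr fun i ↦ ?_
    rw [← ZMod.intCast_zmod_eq_zero_iff_dvd]
    simpa using congrArg (coeff · i) hmap
  exact hp (Nat.isUnit_iff.mp (Int.ofNat_isUnit.mp (hf _ hdvd)))

theorem prod_pow_factorization_le {d : ℕ} (hd : d ≠ 0) (s : Finset ℕ) :
    ∏ p ∈ s, p ^ d.factorization p ≤ d := by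
  have hsupport : ∏ p ∈ s ∪ d.primeFactors, p ^ d.factorization p = d := by
    conv_rhs => rw [← Nat.prod_factorization_pow_eq_self hd]
    refine (Finset.prod_subset Finset.subset_union_right fun p _ hp ↦ ?_).symm
    rw [← Nat.support_factorization, Finsupp.notMem_support_iff] at hp
    rw [hp, pow_zero]
  refine Nat.le_of_dvd hd.bot_lt ?_
  conv_rhs => rw [← hsupport]
  exact Finset.prod_dvd_prod_of_subset _ _ _ Finset.subset_union_left

/-- The roots of the integer polynomial `f` in `ℤ/nℤ`, as a set because `ℤ/nℤ` need not be a
domain, so that `Polynomial.rootSet` does not apply. -/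
def rootsMod (f : ℤ[X]) (n : ℕ) : Set (ZMod n) := {x | aeval x f = 0}

section RootsMod

variable {f : ℤ[X]}

theorem intCast_mem_rootsMod {n : ℕ} {x : ℤ} :
    (x : ZMod n) ∈ rootsMod f n ↔ (n : ℤ) ∣ f.eval x := by
  have haeval : aeval (x : ZMod n) f = (f.eval x : ℤ) := by
    simpa using aeval_algebraMap_apply (ZMod n) x f
  rw [← ZMod.intCast_zmod_eq_zero_iff_dvd, ← haeval, rootsMod, Set.mem_ofPred_eq]

theorem mapsTo_castHom_rootsMod {m n : ℕ} (h : m ∣ n) :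
    Set.MapsTo (ZMod.castHom h (ZMod m)) (rootsMod f n) (rootsMod f m) := by
  intro x hx
  obtain ⟨x, rfl⟩ := ZMod.intCast_surjective x
  rw [map_intCast, intCast_mem_rootsMod]
  exact (Int.natCast_dvd_natCast.mpr h).trans (intCast_mem_rootsMod.mp hx)

theorem ncard_rootsMod_one : (rootsMod f 1).ncard = 1 := by
  have : rootsMod f 1 = Set.univ := Set.eq_univ_of_forall fun _ ↦ Subsingleton.elim _ _
  simp [this]

theorem ncard_rootsMod_mul {m n : ℕ} (h : m.Coprime n) :
    (rootsMod f (m * n)).ncard = (rootsMod f m).ncard * (rootsMod f n).ncard := by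
  let crt := ZMod.chineseRemainder h
  have hcrt : crt '' rootsMod f (m * n) = rootsMod f m ×ˢ rootsMod f n := by
    ext z
    obtain ⟨x, rfl⟩ := crt.surjective z
    obtain ⟨x, rfl⟩ := ZMod.intCast_surjective x
    rw [crt.injective.mem_set_image, map_intCast, Set.mem_prod, Prod.fst_intCast,
      Prod.snd_intCast]
    simp only [intCast_mem_rootsMod, Int.natCast_dvd]
    exact ⟨fun hx ↦ ⟨dvd_of_mul_right_dvd hx, dvd_of_mul_left_dvd hx⟩,
      fun hx ↦ h.mul_dvd_of_dvd_of_dvd hx.1 hx.2⟩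
  rw [← Set.ncard_prod, ← hcrt, Set.ncard_image_of_injective _ crt.injective]

variable {p : ℕ}

theorem ncard_rootsMod_prime_le_natDegree (hf : f.IsPrimitive) (hp : p.Prime) :
    (rootsMod f p).ncard ≤ f.natDegree := by
  have : Fact p.Prime := ⟨hp⟩
  set g := f.map (Int.castRingHom (ZMod p))
  have hg : g ≠ 0 := map_castRingHom_zmod_ne_zero_of_isPrimitive hf hp.ne_one
  have hroots : rootsMod f p = g.roots.toFinset := by
    ext x
    simp [rootsMod, g, hg, aeval_def, eval_map]
  calc (rootsMod f p).ncard = g.roots.toFinset.card := by rw [hroots, Set.ncard_coe_finset]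
    _ ≤ g.roots.card := g.roots.toFinset_card_le
    _ ≤ g.natDegree := g.card_roots'
    _ ≤ f.natDegree := natDegree_map_le

theorem ncard_rootsMod_prime_pow_succ_le (hf : f.IsPrimitive) (hp : p.Prime) (m : ℕ) :
    (rootsMod f (p ^ (m + 1))).ncard ≤ f.natDegree * p ^ m := by
  have : NeZero p := ⟨hp.ne_zero⟩
  have hdvd : p ∣ p ^ (m + 1) := dvd_pow_self p m.succ_ne_zero
  calc (rootsMod f (p ^ (m + 1))).ncard
      ≤ (rootsMod f p).ncard * (p ^ (m + 1) / p) :=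
        ncard_le_ncard_mul_div_of_castHom hdvd hdvd (mapsTo_castHom_rootsMod hdvd)
          fun _ _ _ _ h ↦ h
    _ = (rootsMod f p).ncard * p ^ m := by rw [pow_succ, Nat.mul_div_cancel _ hp.pos]
    _ ≤ f.natDegree * p ^ m := by gcongr; exact ncard_rootsMod_prime_le_natDegree hf hp

variable {u v : ℤ[X]} {D : ℤ}

theorem ncard_rootsMod_prime_pow_add_le {e : ℕ} (hp : p.Prime)
    (hbezout : u * f + v * derivative f = C D) (hD : ¬ (p : ℤ) ^ (e + 1) ∣ D) (k : ℕ) :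
    (rootsMod f (p ^ (e + k + 1))).ncard ≤ (rootsMod f (p ^ (e + 1))).ncard * p ^ e := by
  have : NeZero p := ⟨hp.ne_zero⟩
  have hcoarse : p ^ (e + 1) ∣ p ^ (e + k + 1) := pow_dvd_pow p (by lia)
  have hfine : p ^ (k + 1) ∣ p ^ (e + k + 1) := pow_dvd_pow p (by lia)
  have hindex : p ^ (e + k + 1) / p ^ (k + 1) = p ^ e := by
    rw [add_assoc, pow_add, Nat.mul_div_cancel _ (pow_pos hp.pos _)]
  rw [← hindex]
  refine ncard_le_ncard_mul_div_of_castHom hcoarse hfine (mapsTo_castHom_rootsMod hcoarse) ?_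
  intro x hx y hy hxy
  obtain ⟨x, rfl⟩ := ZMod.intCast_surjective x
  obtain ⟨y, rfl⟩ := ZMod.intCast_surjective y
  rw [intCast_mem_rootsMod] at hx hy
  rw [map_intCast, map_intCast, ZMod.intCast_eq_intCast_iff_dvd_sub] at hxy ⊢
  push_cast at hx hy hxy ⊢
  exact pow_dvd_sub_of_pow_dvd_eval (Nat.prime_iff_prime_int.mp hp) hbezout hD hx hy hxy

theorem ncard_rootsMod_prime_pow_le {e m : ℕ} (hf : f.IsPrimitive) (hp : p.Prime)
    (hbezout : u * f + v * derivative f = C D) (hD : ¬ (p : ℤ) ^ (e + 1) ∣ D) (hm : m ≠ 0) :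
    (rootsMod f (p ^ m)).ncard ≤ f.natDegree * (p ^ e) ^ 2 := by
  obtain ⟨m, rfl⟩ := Nat.exists_eq_succ_of_ne_zero hm
  obtain hme | ⟨k, rfl⟩ := (le_total m e).imp_right Nat.exists_eq_add_of_le
  · calc (rootsMod f (p ^ (m + 1))).ncard
        ≤ f.natDegree * p ^ m := ncard_rootsMod_prime_pow_succ_le hf hp m
      _ ≤ f.natDegree * (p ^ e) ^ 2 := by
        rw [← pow_mul]
        gcongr
        exacts [hp.one_le, by lia]
  · calc (rootsMod f (p ^ (e + k + 1))).ncard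
        ≤ (rootsMod f (p ^ (e + 1))).ncard * p ^ e :=
          ncard_rootsMod_prime_pow_add_le hp hbezout hD k
      _ ≤ f.natDegree * p ^ e * p ^ e := by
        gcongr
        exact ncard_rootsMod_prime_pow_succ_le hf hp e
      _ = f.natDegree * (p ^ e) ^ 2 := by ring

theorem ncard_rootsMod_le (hf : f.IsPrimitive) (hbezout : u * f + v * derivative f = C D)
    (hD : D ≠ 0) {n : ℕ} (hn : n ≠ 0) :
    (rootsMod f n).ncard ≤ D.natAbs ^ 2 * f.natDegree ^ n.primeFactors.card := by
  have hD' : D.natAbs ≠ 0 := Int.natAbs_ne_zero.mpr hD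
  have hprime_pow (p : ℕ) (hp : p ∈ n.primeFactors) :
      (rootsMod f (p ^ n.factorization p)).ncard ≤
        f.natDegree * (p ^ D.natAbs.factorization p) ^ 2 := by
    have hpp := Nat.prime_of_mem_primeFactors hp
    refine ncard_rootsMod_prime_pow_le hf hpp hbezout ?_
      (hpp.factorization_pos_of_dvd hn (Nat.dvd_of_mem_primeFactors hp)).ne'
    intro h
    refine Nat.pow_succ_factorization_not_dvd hD' hpp (Int.natCast_dvd.mp ?_)
    exact_mod_cast h
  calc (rootsMod f n).ncard
      = ∏ p ∈ n.primeFactors, (rootsMod f (p ^ n.factorization p)).ncard :=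
        Nat.multiplicative_factorization (fun n ↦ (rootsMod f n).ncard)
          (fun _ _ ↦ ncard_rootsMod_mul) ncard_rootsMod_one hn
    _ ≤ ∏ p ∈ n.primeFactors, f.natDegree * (p ^ D.natAbs.factorization p) ^ 2 :=
        Finset.prod_le_prod' hprime_pow
    _ = (∏ p ∈ n.primeFactors, p ^ D.natAbs.factorization p) ^ 2 *
          f.natDegree ^ n.primeFactors.card := by
        rw [Finset.prod_mul_distrib, Finset.prod_const, Finset.prod_pow, mul_comm]
    _ ≤ D.natAbs ^ 2 * f.natDegree ^ n.primeFactors.card := by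
        gcongr
        exact prod_pow_factorization_le hD' _

end RootsMod

theorem card_omega_le_general {f : ℤ[X]} (hf : f.IsPrimitive)
    (hsep : (f.map (Int.castRingHom ℚ)).Separable) :
    ∃ C : ℕ, ∀ n : ℕ, n ≠ 0 →
      (rootsMod f n).Finite ∧
        (rootsMod f n).ncard ≤ C * f.natDegree ^ n.primeFactors.card := by
  rw [separable_def, derivative_map] at hsep
  obtain ⟨u, v, D, hD, hbezout⟩ :=
    exists_mul_add_mul_eq_C_of_isCoprime_map (RingHom.injective_int (Int.castRingHom ℚ)) hsep
  refine ⟨D.natAbs ^ 2, fun n hn ↦ ⟨?_, ncard_rootsMod_le hf hbezout hD hn⟩⟩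
  have : NeZero n := ⟨hn⟩
  exact Set.toFinite _

section Cubic

variable {a b c : ℤ}

theorem omegaSet_eq_rootsMod (d : ℕ) :
    OmegaSet a b c d = rootsMod (Cubic.toPoly ⟨1, a, b, c⟩) (d ^ 2) := by
  ext x
  simp [OmegaSet, rootsMod, Cubic.toPoly]

theorem DistinctRoots.separable (h : DistinctRoots a b c) :
    ((Cubic.toPoly ⟨1, a, b, c⟩).map (Int.castRingHom ℚ)).Separable := by
  obtain ⟨r₁, r₂, r₃, h₁₂, h₁₃, h₂₃, hfactor⟩ := h
  have hprod : ((Cubic.toPoly ⟨1, a, b, c⟩).map (Int.castRingHom ℚ)).map (algebraMap ℚ ℂ) =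
      (X - C r₁) * (X - C r₂) * (X - C r₃) := by
    refine Polynomial.funext fun z ↦ ?_
    simpa [Cubic.toPoly] using hfactor z
  have hcoprime {r s : ℂ} (hrs : r ≠ s) : IsCoprime (X - C r) (X - C s) :=
    isCoprime_X_sub_C_of_isUnit_sub (sub_ne_zero.mpr hrs).isUnit
  rw [← separable_map (algebraMap ℚ ℂ), hprod]
  exact (separable_X_sub_C.mul separable_X_sub_C (hcoprime h₁₂)).mul separable_X_sub_C
    ((hcoprime h₁₃).mul_left (hcoprime h₂₃))

end Cubic

/-- There is a constant `C` (depending only on `a, b, c`) such that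
`#Ω_d ≤ C·3^{ν(d)}` for all `d ≥ 1`, where `ν(d)` is the number of distinct
prime divisors of `d`. -/
theorem card_omega_le (a b c : ℤ) (hf : DistinctRoots a b c) :
    ∃ C : ℕ, ∀ d : ℕ, 0 < d →
      (OmegaSet a b c d).Finite ∧
        (OmegaSet a b c d).ncard ≤ C * 3 ^ d.primeFactors.card := by
  obtain ⟨C, hC⟩ := card_omega_le_general Cubic.monic_of_a_eq_one'.isPrimitive hf.separable
  exact ⟨C, fun d hd ↦ by
    simpa [omegaSet_eq_rootsMod, Cubic.natDegree_of_a_ne_zero', Nat.primeFactors_pow]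
      using hC (d ^ 2) (pow_ne_zero 2 hd.ne')⟩
end

section
/- There exists a constant C (depending only on a, b, c) such that for every positive integer t, the number of triples (α, d, d') with d, d' positive integers, gcd(d,d') = 1, dd' = t, and α ∈ Ω_d, is at most C·4^{ν(t)}, where ν(t) is the number of distinct prime divisors of t. -/
/-!
Let `D ≠ 0` be an integer of the form `u f + v f'` with `u, v ∈ ℤ[X]`, for instance the resultant
of `f` and `f'`. At a root `x` of `f` modulo `p ^ k` the identity reads `v(x) f'(x) = D`, so Taylor
expansion shows that a second root `y` with `y ≡ x` modulo `p D` satisfies `D (y - x) = 0`. If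
`p ∤ D`, a root modulo `p ^ k` is therefore determined by its reduction modulo `p`, which leaves at
most `deg f` roots; if `p ∣ D`, there are at most `p D · D ≤ D³` of them. By the Chinese remainder
theorem `f` has at most `C (deg f) ^ ν(n)` roots modulo `n`. Finally, a divisor `d` of `t` coprime
to `t / d` is determined by its set of prime factors, and summing `(deg f) ^ #S` over the subsets
`S` of the prime factors of `t` gives `(deg f + 1) ^ ν(t)`.
-/

open Polynomial

section ZeroLocus

variable {A R S : Type*} [CommRing A] [CommRing R] [CommRing S] [Algebra A R] [Algebra A S]
  {f : A[X]}

/-- The set of zeros of `f` in an `A`-algebra `R`. Unlike `Polynomial.rootSet` it does not require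
`R` to be a domain, and it is all of `R` if `f` vanishes over `R`. -/
def zeroLocus (f : A[X]) (R : Type*) [CommRing R] [Algebra A R] : Set R :=
  {x | aeval x f = 0}

theorem mem_zeroLocus {x : R} : x ∈ zeroLocus f R ↔ aeval x f = 0 :=
  Iff.rfl

theorem map_mem_zeroLocus (φ : R →ₐ[A] S) {x : R} (hx : x ∈ zeroLocus f R) :
    φ x ∈ zeroLocus f S := by
  rw [mem_zeroLocus, aeval_algHom_apply, mem_zeroLocus.1 hx, map_zero]

theorem ncard_zeroLocus_congr (e : R ≃ₐ[A] S) :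
    (zeroLocus f R).ncard = (zeroLocus f S).ncard := by
  rw [← Set.ncard_image_of_injective _ e.injective]
  congr 1
  refine (Set.image_subset_iff.2 fun x => map_mem_zeroLocus e.toAlgHom).antisymm fun y hy => ?_
  exact ⟨e.symm y, map_mem_zeroLocus e.symm.toAlgHom hy, e.apply_symm_apply y⟩

theorem zeroLocus_prod : zeroLocus f (R × S) = zeroLocus f R ×ˢ zeroLocus f S := by
  ext x
  simp only [mem_zeroLocus, Set.mem_prod, aeval_prod_apply, Prod.mk_eq_zero]

theorem aeval_derivative_dvd_algebraMap {δ : A} (hδ : C δ ∈ Ideal.span {f, derivative f}) {x : R}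
    (hx : x ∈ zeroLocus f R) : aeval x (derivative f) ∣ algebraMap A R δ := by
  obtain ⟨u, v, huv⟩ := Ideal.mem_span_pair.1 hδ
  refine Dvd.intro_left (aeval x v) ?_
  simpa [mem_zeroLocus.1 hx] using congrArg (aeval x) huv

theorem ncard_zeroLocus_le_natDegree [IsDomain R] {δ : A}
    (hδ : C δ ∈ Ideal.span {f, derivative f}) (hδR : algebraMap A R δ ≠ 0) :
    (zeroLocus f R).ncard ≤ f.natDegree := by
  have hf : f.map (algebraMap A R) ≠ 0 := by
    intro h
    have hroot : (0 : R) ∈ zeroLocus f R := by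
      rw [mem_zeroLocus, aeval_def, ← eval_map, h, eval_zero]
    have hderiv : aeval (0 : R) (derivative f) = 0 := by
      rw [aeval_def, ← eval_map, ← derivative_map, h, derivative_zero, eval_zero]
    exact hδR (zero_dvd_iff.1 (hderiv ▸ aeval_derivative_dvd_algebraMap hδ hroot))
  have heq : zeroLocus f R = f.rootSet R := by
    ext x
    rw [mem_zeroLocus, mem_rootSet', and_iff_right hf]
  exact heq ▸ ncard_rootSet_le f R

theorem mul_sub_eq_zero_of_mem_zeroLocus {x y δ π : R} (hx : x ∈ zeroLocus f R)
    (hy : y ∈ zeroLocus f R) (hδ : aeval x (derivative f) ∣ δ) (hπ : IsNilpotent π)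
    (hxy : π * δ ∣ y - x) : δ * (y - x) = 0 := by
  obtain ⟨v, rfl⟩ := hδ
  obtain ⟨z, hz⟩ := hxy
  obtain ⟨q, hq⟩ := (f.map (algebraMap A R)).binomExpansion x (y - x)
  simp only [add_sub_cancel, derivative_map, eval_map_algebraMap, mem_zeroLocus.1 hx,
    mem_zeroLocus.1 hy, zero_add] at hq
  -- Multiplying the Taylor expansion by `v` and substituting `y - x = π δ z` in one of the two
  -- factors of `(y - x) ^ 2` gives `δ (y - x) (1 + π (z q v)) = 0`.
  have hunit : IsUnit (1 + π * (z * q * v)) :=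
    ((Commute.all _ _).isNilpotent_mul_right hπ).isUnit_one_add
  refine hunit.mul_left_eq_zero.1 ?_
  linear_combination (-v) * hq - q * v * (y - x) * hz

end ZeroLocus

theorem exists_C_mem_span_derivative {A K : Type*} [CommRing A] [Field K] {f : A[X]} {φ : A →+* K}
    (hφ : Function.Injective φ) (hdeg : f.natDegree ≠ 0) (hsep : (f.map φ).Separable) :
    ∃ δ : A, δ ≠ 0 ∧ C δ ∈ Ideal.span {f, derivative f} := by
  obtain ⟨u, v, -, -, huv⟩ :=
    exists_mul_add_mul_eq_C_resultant f (derivative f) le_rfl le_rfl (Or.inl hdeg)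
  refine ⟨resultant f (derivative f), fun h => ?_,
    Ideal.mem_span_pair.2 ⟨u, v, by rw [← huv]; ring⟩⟩
  apply resultant_ne_zero (f.map φ) (derivative (f.map φ)) hsep
  rw [derivative_map, natDegree_map_eq_of_injective hφ, natDegree_map_eq_of_injective hφ,
    resultant_map_map, h, map_zero]

theorem exists_natCast_mem_span_derivative {f : ℤ[X]} (hdeg : f.natDegree ≠ 0)
    (hsep : (f.map (Int.castRingHom ℚ)).Separable) :
    ∃ D : ℕ, D ≠ 0 ∧ C (D : ℤ) ∈ Ideal.span {f, derivative f} := by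
  obtain ⟨δ, hδ, hmem⟩ := exists_C_mem_span_derivative Int.cast_injective hdeg hsep
  refine ⟨δ.natAbs, Int.natAbs_ne_zero.2 hδ, ?_⟩
  rcases Int.natAbs_eq δ with h | h
  · rwa [← h]
  · rwa [← neg_mem_iff, ← C_neg, ← h]

theorem ncard_le_index_mul_card {G : Type*} [AddCommGroup G] (H K : AddSubgroup G)
    [H.FiniteIndex] [Finite K] {s : Set G} (h : ∀ x ∈ s, ∀ y ∈ s, y - x ∈ H → y - x ∈ K) :
    s.ncard ≤ H.index * Nat.card K := by
  let mk : G → G ⧸ H := QuotientAddGroup.mk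
  let rep : G ⧸ H → G := Function.invFunOn mk s
  have hmaps : ∀ x ∈ s, (mk x, x - rep (mk x)) ∈ (Set.univ : Set (G ⧸ H)) ×ˢ (K : Set G) := by
    intro x hx
    have hfiber : ∃ y ∈ s, mk y = mk x := ⟨x, hx, rfl⟩
    refine ⟨trivial, h _ (Function.invFunOn_mem hfiber) x hx ?_⟩
    rw [← neg_add_eq_sub]
    exact QuotientAddGroup.eq.1 (Function.invFunOn_eq hfiber)
  have hinj : Set.InjOn (fun x => (mk x, x - rep (mk x))) s := by
    intro x _ y _ hxy
    obtain ⟨hmk, hsub⟩ := Prod.mk.inj hxy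
    rw [hmk] at hsub
    exact sub_left_injective hsub
  calc s.ncard ≤ ((Set.univ : Set (G ⧸ H)) ×ˢ (K : Set G)).ncard :=
        Set.ncard_le_ncard_of_injOn _ hmaps hinj (Set.finite_univ.prod (Set.toFinite _))
    _ = H.index * Nat.card K := by
        rw [Set.ncard_prod, Set.ncard_univ, AddSubgroup.index, ← Nat.card_coe_set_eq,
          SetLike.coe_sort_coe]

theorem ncard_le_mul_of_isAddCyclic {G : Type*} [AddCommGroup G] [IsAddCyclic G] [Finite G]
    {m k : ℕ} (hm : m ≠ 0) (hk : k ≠ 0) {s : Set G}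
    (h : ∀ x ∈ s, ∀ y ∈ s, (∃ z, m • z = y - x) → k • (y - x) = 0) : s.ncard ≤ m * k := by
  calc s.ncard ≤ (nsmulAddMonoidHom m : G →+ G).range.index *
        Nat.card (nsmulAddMonoidHom k : G →+ G).ker := ncard_le_index_mul_card _ _ h
    _ = (Nat.card G).gcd m * (Nat.card G).gcd k := by
        rw [IsAddCyclic.index_nsmulAddMonoidHom_range, IsAddCyclic.card_nsmulAddMonoidHom_ker]
    _ ≤ m * k := Nat.mul_le_mul (Nat.gcd_le_right _ hm.bot_lt) (Nat.gcd_le_right _ hk.bot_lt)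

section ZMod

variable {f : ℤ[X]}

theorem ncard_zeroLocus_zmod_mul {m n : ℕ} (h : m.Coprime n) :
    (zeroLocus f (ZMod (m * n))).ncard =
      (zeroLocus f (ZMod m)).ncard * (zeroLocus f (ZMod n)).ncard := by
  -- `ZMod m × ZMod n` carries two `ℤ`-algebra structures, equal only by unfolding, so
  -- `zeroLocus_prod` cannot be used for rewriting.
  calc (zeroLocus f (ZMod (m * n))).ncard = (zeroLocus f (ZMod m × ZMod n)).ncard :=
        ncard_zeroLocus_congr (ZMod.chineseRemainder h).toIntAlgEquiv
    _ = (zeroLocus f (ZMod m) ×ˢ zeroLocus f (ZMod n)).ncard := congrArg Set.ncard zeroLocus_prod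
    _ = (zeroLocus f (ZMod m)).ncard * (zeroLocus f (ZMod n)).ncard := Set.ncard_prod

theorem isNilpotent_natCast_zmod_pow (p k : ℕ) : IsNilpotent (p : ZMod (p ^ k)) :=
  ⟨k, by rw [← Nat.cast_pow, ZMod.natCast_self]⟩

theorem natCast_dvd_of_castHom_eq_zero {m n : ℕ} [NeZero n] (h : m ∣ n) {z : ZMod n}
    (hz : ZMod.castHom h (ZMod m) z = 0) : (m : ZMod n) ∣ z := by
  rw [← ZMod.natCast_zmod_val z, map_natCast, ZMod.natCast_eq_zero_iff] at hz
  rw [← ZMod.natCast_zmod_val z]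
  exact Nat.cast_dvd_cast hz

variable {D : ℕ}

theorem natCast_mul_sub_eq_zero_of_mem_zeroLocus
    (hD : C (D : ℤ) ∈ Ideal.span {f, derivative f}) {p k : ℕ} {x y : ZMod (p ^ k)}
    (hx : x ∈ zeroLocus f (ZMod (p ^ k))) (hy : y ∈ zeroLocus f (ZMod (p ^ k)))
    (hxy : (p * D : ZMod (p ^ k)) ∣ y - x) : (D : ZMod (p ^ k)) * (y - x) = 0 :=
  mul_sub_eq_zero_of_mem_zeroLocus hx hy (by simpa using aeval_derivative_dvd_algebraMap hD hx)
    (isNilpotent_natCast_zmod_pow p k) hxy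

theorem ncard_zeroLocus_zmod_pow_le (hD : C (D : ℤ) ∈ Ideal.span {f, derivative f})
    {p : ℕ} (hp : p ≠ 0) (hD₀ : D ≠ 0) (k : ℕ) :
    (zeroLocus f (ZMod (p ^ k))).ncard ≤ p * D * D := by
  have : NeZero (p ^ k) := ⟨pow_ne_zero k hp⟩
  refine ncard_le_mul_of_isAddCyclic (mul_ne_zero hp hD₀) hD₀ fun x hx y hy ⟨z, hz⟩ => ?_
  rw [nsmul_eq_mul]
  exact natCast_mul_sub_eq_zero_of_mem_zeroLocus hD hx hy ⟨z, by rw [← hz]; simp⟩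

theorem ncard_zeroLocus_zmod_prime_pow_le_natDegree
    (hD : C (D : ℤ) ∈ Ideal.span {f, derivative f}) {p k : ℕ} (hp : p.Prime) (hk : k ≠ 0)
    (hpD : ¬ p ∣ D) : (zeroLocus f (ZMod (p ^ k))).ncard ≤ f.natDegree := by
  have : Fact p.Prime := ⟨hp⟩
  have : NeZero (p ^ k) := ⟨pow_ne_zero k hp.ne_zero⟩
  have hDunit : IsUnit (D : ZMod (p ^ k)) :=
    (ZMod.isUnit_iff_coprime _ _).2 ((hp.coprime_iff_not_dvd.2 hpD).symm.pow_right k)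
  let red : ZMod (p ^ k) →ₐ[ℤ] ZMod p := (ZMod.castHom (dvd_pow_self p hk) (ZMod p)).toIntAlgHom
  have hinj : Set.InjOn red (zeroLocus f (ZMod (p ^ k))) := by
    intro x hx y hy hxy
    have hdvd : (p * D : ZMod (p ^ k)) ∣ y - x :=
      hDunit.mul_right_dvd.2 (natCast_dvd_of_castHom_eq_zero (dvd_pow_self p hk)
        (show red (y - x) = 0 by rw [map_sub, hxy, sub_self]))
    have hzero := natCast_mul_sub_eq_zero_of_mem_zeroLocus hD hx hy hdvd
    exact (sub_eq_zero.1 (hDunit.mul_right_eq_zero.1 hzero)).symm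
  calc (zeroLocus f (ZMod (p ^ k))).ncard ≤ (zeroLocus f (ZMod p)).ncard :=
        Set.ncard_le_ncard_of_injOn red (fun _ => map_mem_zeroLocus red) hinj
    _ ≤ f.natDegree := ncard_zeroLocus_le_natDegree hD
        (by simpa [ZMod.natCast_eq_zero_iff] using hpD)

theorem ncard_zeroLocus_zmod_prime_pow_le (hD : C (D : ℤ) ∈ Ideal.span {f, derivative f})
    (hdeg : f.natDegree ≠ 0) (hD₀ : D ≠ 0) {p k : ℕ} (hp : p.Prime) (hk : k ≠ 0) :
    (zeroLocus f (ZMod (p ^ k))).ncard ≤ f.natDegree * if p ∣ D then D ^ 3 else 1 := by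
  split_ifs with hpD
  · calc (zeroLocus f (ZMod (p ^ k))).ncard ≤ p * D * D :=
          ncard_zeroLocus_zmod_pow_le hD hp.ne_zero hD₀ k
      _ ≤ D * D * D := by gcongr; exact Nat.le_of_dvd hD₀.bot_lt hpD
      _ = D ^ 3 := by ring
      _ ≤ f.natDegree * D ^ 3 := Nat.le_mul_of_pos_left _ hdeg.bot_lt
  · simpa using ncard_zeroLocus_zmod_prime_pow_le_natDegree hD hp hk hpD

theorem ncard_zeroLocus_zmod_le_prod (hD : C (D : ℤ) ∈ Ideal.span {f, derivative f})
    (hdeg : f.natDegree ≠ 0) (hD₀ : D ≠ 0) {n : ℕ} (hn : n ≠ 0) :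
    (zeroLocus f (ZMod n)).ncard ≤
      ∏ p ∈ n.primeFactors, f.natDegree * if p ∣ D then D ^ 3 else 1 := by
  induction n using Nat.recOnPosPrimePosCoprime with
  | zero => exact absurd rfl hn
  | one => simpa using Set.ncard_le_one_of_subsingleton (zeroLocus f (ZMod 1))
  | prime_pow p k hp hk =>
    rw [Nat.primeFactors_prime_pow hk.ne' hp, Finset.prod_singleton]
    exact ncard_zeroLocus_zmod_prime_pow_le hD hdeg hD₀ hp hk.ne'
  | coprime m n hm hn hmn ihm ihn =>
    rw [ncard_zeroLocus_zmod_mul hmn, hmn.primeFactors_mul,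
      Finset.prod_union hmn.disjoint_primeFactors]
    exact Nat.mul_le_mul (ihm (by lia)) (ihn (by lia))

theorem ncard_zeroLocus_zmod_le (hD : C (D : ℤ) ∈ Ideal.span {f, derivative f})
    (hdeg : f.natDegree ≠ 0) (hD₀ : D ≠ 0) {n : ℕ} (hn : n ≠ 0) :
    (zeroLocus f (ZMod n)).ncard ≤
      (D ^ 3) ^ D.primeFactors.card * f.natDegree ^ n.primeFactors.card := by
  have hbad : n.primeFactors.filter (· ∣ D) ⊆ D.primeFactors := fun p hp =>
    Nat.mem_primeFactors.2 ⟨Nat.prime_of_mem_primeFactors (Finset.mem_filter.1 hp).1,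
      (Finset.mem_filter.1 hp).2, hD₀⟩
  calc (zeroLocus f (ZMod n)).ncard
      ≤ ∏ p ∈ n.primeFactors, f.natDegree * if p ∣ D then D ^ 3 else 1 :=
        ncard_zeroLocus_zmod_le_prod hD hdeg hD₀ hn
    _ = (D ^ 3) ^ (n.primeFactors.filter (· ∣ D)).card * f.natDegree ^ n.primeFactors.card := by
        rw [Finset.prod_mul_distrib, Finset.prod_const, ← Finset.prod_filter, Finset.prod_const,
          mul_comm]
    _ ≤ (D ^ 3) ^ D.primeFactors.card * f.natDegree ^ n.primeFactors.card := by
        gcongr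
        exact Nat.one_le_iff_ne_zero.2 (pow_ne_zero 3 hD₀)

end ZMod

section UnitaryDivisors

/-- The divisors `d` of `t` that are coprime to the complementary divisor `t / d`; there are none
for `t = 0`. -/
def unitaryDivisors (t : ℕ) : Finset ℕ :=
  t.divisors.filter fun d => d.Coprime (t / d)

variable {d d' t : ℕ}

theorem mem_unitaryDivisors :
    d ∈ unitaryDivisors t ↔ 0 < d ∧ 0 < t / d ∧ d.Coprime (t / d) ∧ d * (t / d) = t := by
  rw [unitaryDivisors, Finset.mem_filter, Nat.mem_divisors]
  constructor
  · rintro ⟨⟨hdvd, ht⟩, hcop⟩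
    have hd : 0 < d := Nat.pos_of_dvd_of_pos hdvd ht.bot_lt
    exact ⟨hd, Nat.div_pos (Nat.le_of_dvd ht.bot_lt hdvd) hd, hcop, Nat.mul_div_cancel' hdvd⟩
  · rintro ⟨hd, hquot, hcop, hmul⟩
    exact ⟨⟨Dvd.intro _ hmul, hmul ▸ (Nat.mul_pos hd hquot).ne'⟩, hcop⟩

theorem dvd_of_primeFactors_subset (hd : d ∈ unitaryDivisors t) (hd' : d' ∈ unitaryDivisors t)
    (h : d.primeFactors ⊆ d'.primeFactors) : d ∣ d' := by
  obtain ⟨hdpos, -, -, hdt⟩ := mem_unitaryDivisors.1 hd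
  obtain ⟨-, hquot, hcop', hd't⟩ := mem_unitaryDivisors.1 hd'
  have hcop : d.Coprime (t / d') := by
    rw [← Nat.disjoint_primeFactors hdpos.ne' hquot.ne']
    exact hcop'.disjoint_primeFactors.mono_left h
  refine hcop.dvd_of_dvd_mul_right ?_
  rw [hd't]
  exact Dvd.intro _ hdt

theorem injOn_primeFactors_unitaryDivisors (t : ℕ) :
    Set.InjOn Nat.primeFactors (unitaryDivisors t : Set ℕ) := fun _ hd _ hd' h =>
  Nat.dvd_antisymm (dvd_of_primeFactors_subset hd hd' h.subset)
    (dvd_of_primeFactors_subset hd' hd h.superset)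

theorem sum_unitaryDivisors_pow_card_primeFactors_le (r t : ℕ) :
    ∑ d ∈ unitaryDivisors t, r ^ d.primeFactors.card ≤ (r + 1) ^ t.primeFactors.card := by
  have himage : (unitaryDivisors t).image Nat.primeFactors ⊆ t.primeFactors.powerset := by
    intro s hs
    obtain ⟨d, hd, rfl⟩ := Finset.mem_image.1 hs
    obtain ⟨hdvd, ht⟩ := Nat.mem_divisors.1 (Finset.mem_filter.1 hd).1
    exact Finset.mem_powerset.2 (Nat.primeFactors_mono hdvd ht)
  calc ∑ d ∈ unitaryDivisors t, r ^ d.primeFactors.card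
      = ∑ s ∈ (unitaryDivisors t).image Nat.primeFactors, r ^ s.card :=
        (Finset.sum_image (f := fun s => r ^ s.card) (injOn_primeFactors_unitaryDivisors t)).symm
    _ ≤ ∑ s ∈ t.primeFactors.powerset, r ^ s.card := Finset.sum_le_sum_of_subset himage
    _ = (r + 1) ^ t.primeFactors.card := by
        simpa using Finset.sum_pow_mul_eq_add_pow r 1 t.primeFactors

end UnitaryDivisors

theorem primeFactors_pow_subset (d k : ℕ) : (d ^ k).primeFactors ⊆ d.primeFactors := by
  rcases eq_or_ne k 0 with rfl | hk
  · simp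
  · rw [Nat.primeFactors_pow d hk]

/-- The triples `(α, d, d')` with `d, d'` coprime positive integers, `d d' = t`, and `α` a root of
`f` modulo `d ^ k`. As in `TripSet`, they are stored as `⟨d, d', α⟩`. -/
def rootTriples (f : ℤ[X]) (k t : ℕ) : Set (Σ d : ℕ, ℕ × ZMod (d ^ k)) :=
  {x | 0 < x.1 ∧ 0 < x.2.1 ∧ x.1.Coprime x.2.1 ∧ x.1 * x.2.1 = t ∧
    x.2.2 ∈ zeroLocus f (ZMod (x.1 ^ k))}

theorem rootTriples_eq_biUnion (f : ℤ[X]) (k t : ℕ) :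
    rootTriples f k t = ⋃ d ∈ unitaryDivisors t,
      (fun α => ⟨d, t / d, α⟩) '' zeroLocus f (ZMod (d ^ k)) := by
  ext ⟨d, d', α⟩
  simp only [Set.mem_iUnion, Set.mem_image, exists_prop]
  constructor
  · rintro ⟨hd, hd', hcop, rfl, hα⟩
    have hquot : d * d' / d = d' := Nat.mul_div_cancel_left d' hd
    refine ⟨d, mem_unitaryDivisors.2 ?_, α, hα, by rw [hquot]⟩
    rw [hquot]
    exact ⟨hd, hd', hcop, rfl⟩
  · rintro ⟨_, hd, _, hα, ⟨⟩⟩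
    obtain ⟨hdpos, hquot, hcop, hmul⟩ := mem_unitaryDivisors.1 hd
    exact ⟨hdpos, hquot, hcop, hmul, hα⟩

theorem finite_rootTriples (f : ℤ[X]) (k t : ℕ) : (rootTriples f k t).Finite := by
  rw [rootTriples_eq_biUnion]
  refine (unitaryDivisors t).finite_toSet.biUnion fun d hd => Set.Finite.image _ ?_
  have : NeZero (d ^ k) := ⟨pow_ne_zero k (mem_unitaryDivisors.1 hd).1.ne'⟩
  exact Set.toFinite _

theorem ncard_rootTriples_le_sum (f : ℤ[X]) (k t : ℕ) :
    (rootTriples f k t).ncard ≤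
      ∑ d ∈ unitaryDivisors t, (zeroLocus f (ZMod (d ^ k))).ncard := by
  rw [rootTriples_eq_biUnion]
  refine (Finset.set_ncard_biUnion_le _ _).trans (Finset.sum_le_sum fun d hd => ?_)
  have : NeZero (d ^ k) := ⟨pow_ne_zero k (mem_unitaryDivisors.1 hd).1.ne'⟩
  exact Set.ncard_image_le

theorem card_triples_le_general (f : ℤ[X]) (hdeg : f.natDegree ≠ 0)
    (hsep : (f.map (Int.castRingHom ℚ)).Separable) :
    ∃ C : ℕ, ∀ k t : ℕ, (rootTriples f k t).Finite ∧
      (rootTriples f k t).ncard ≤ C * (f.natDegree + 1) ^ t.primeFactors.card := by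
  obtain ⟨D, hD₀, hD⟩ := exists_natCast_mem_span_derivative hdeg hsep
  refine ⟨(D ^ 3) ^ D.primeFactors.card, fun k t => ⟨finite_rootTriples f k t, ?_⟩⟩
  have hroots : ∀ d ∈ unitaryDivisors t, (zeroLocus f (ZMod (d ^ k))).ncard ≤
      (D ^ 3) ^ D.primeFactors.card * f.natDegree ^ d.primeFactors.card := by
    intro d hd
    have hd₀ : d ≠ 0 := (mem_unitaryDivisors.1 hd).1.ne'
    refine (ncard_zeroLocus_zmod_le hD hdeg hD₀ (pow_ne_zero k hd₀)).trans ?_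
    gcongr
    · exact hdeg.bot_lt
    · exact primeFactors_pow_subset d k
  calc (rootTriples f k t).ncard
      ≤ ∑ d ∈ unitaryDivisors t, (zeroLocus f (ZMod (d ^ k))).ncard :=
        ncard_rootTriples_le_sum f k t
    _ ≤ ∑ d ∈ unitaryDivisors t,
          (D ^ 3) ^ D.primeFactors.card * f.natDegree ^ d.primeFactors.card :=
        Finset.sum_le_sum hroots
    _ ≤ (D ^ 3) ^ D.primeFactors.card * (f.natDegree + 1) ^ t.primeFactors.card := by
        rw [← Finset.mul_sum]
        exact Nat.mul_le_mul_left _ (sum_unitaryDivisors_pow_card_primeFactors_le _ _)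

section Cubic

variable {a b c : ℤ}

/-- The polynomial `f = X³ + aX² + bX + c`. -/
noncomputable def monicCubic (a b c : ℤ) : ℤ[X] :=
  X ^ 3 + C a * X ^ 2 + C b * X + C c

theorem natDegree_monicCubic : (monicCubic a b c).natDegree = 3 := by
  rw [monicCubic]
  compute_degree!

theorem tripSet_eq_rootTriples (t : ℕ) : TripSet a b c t = rootTriples (monicCubic a b c) 2 t := by
  ext x
  simp [TripSet, rootTriples, OmegaSet, mem_zeroLocus, monicCubic]

theorem DistinctRoots.separable_monicCubic (h : DistinctRoots a b c) :
    ((monicCubic a b c).map (Int.castRingHom ℚ)).Separable := by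
  obtain ⟨r₁, r₂, r₃, h₁₂, h₁₃, h₂₃, hf⟩ := h
  have hinj : Function.Injective ![r₁, r₂, r₃] := by
    intro i j hij
    fin_cases i <;> fin_cases j <;> simp_all
  have hfactor : ((monicCubic a b c).map (Int.castRingHom ℚ)).map (algebraMap ℚ ℂ) =
      ∏ i, (X - C (![r₁, r₂, r₃] i)) := by
    refine Polynomial.funext fun z => ?_
    simpa [monicCubic, Fin.prod_univ_three] using hf z
  rw [← separable_map (algebraMap ℚ ℂ), hfactor]
  exact separable_prod_X_sub_C_iff.2 hinj

end Cubic

/-- There is a constant `C` (depending only on `a, b, c`) such that for every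
`t ≥ 1` the number of triples `(α, d, d')` with `d, d'` coprime positive integers,
`dd' = t`, and `α ∈ Ω_d` is at most `C·4^{ν(t)}`. -/
theorem card_triples_le (a b c : ℤ) (hf : DistinctRoots a b c) :
    ∃ C : ℕ, ∀ t : ℕ, 0 < t →
      (TripSet a b c t).Finite ∧
        (TripSet a b c t).ncard ≤ C * 4 ^ t.primeFactors.card := by
  obtain ⟨C, hC⟩ := card_triples_le_general _ (natDegree_monicCubic.trans_ne three_ne_zero)
    hf.separable_monicCubic
  exact ⟨C, fun t _ => by simpa only [tripSet_eq_rootTriples, natDegree_monicCubic] using hC 2 t⟩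
end
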